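/- For binary images P and G on the same h×w grid and any real ε with 0 < ε < 1/4, the closure of every connected component of FP = F_ε(P) ∩ B_{2ε}(G) is homeomorphic to a closed disk with finitely many open balls cut out: that is, homeomorphic to a set of the form D² \ (U₁ ∪ … ∪ Uₙ), where D² = {x ∈ ℝ² : ‖x‖₂ ≤ 1}, n ∈ ℕ, and U₁, …, Uₙ are open Euclidean disks whose closures are pairwise disjoint and contained in the open unit disk. The same holds for every connected component of FN = B_ε(P) ∩ F_{2ε}(G). -/

import Mathlib

open Set Metric

noncomputable section

/-- The plane modeled as `Fin 2 → ℝ` with the Pi (sup) norm. -/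
abbrev Plane : Type := Fin 2 → ℝ

/-- The Euclidean plane (for Euclidean-norm disks and annuli). -/
abbrev EPlane : Type := EuclideanSpace ℝ (Fin 2)

/-- The closed unit pixel `[i-1,i] × [j-1,j]` for a pixel index `(i,j)`. -/
def pixel (p : ℕ × ℕ) : Set Plane :=
  {x | x 0 ∈ Set.Icc ((p.1 : ℝ) - 1) (p.1 : ℝ) ∧ x 1 ∈ Set.Icc ((p.2 : ℝ) - 1) (p.2 : ℝ)}

/-- A binary image `S` lies on the `h × w` grid `{1,…,h} × {1,…,w}`. -/
def OnGrid (S : Set (ℕ × ℕ)) (h w : ℕ) : Prop :=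
  S ⊆ Set.Icc 1 h ×ˢ Set.Icc 1 w

/-- The foreground `F(S)` of a binary image. -/
def fg (S : Set (ℕ × ℕ)) : Set Plane := ⋃ p ∈ S, pixel p

/-- Closed `ε`-thickening `D_ε(X)` with respect to the sup norm. -/
def thick (ε : ℝ) (X : Set Plane) : Set Plane := {y | ∃ x ∈ X, ‖x - y‖ ≤ ε}

/-- `C` is a connected component of `A` (as a subset of the plane). -/
def IsCompOf (C A : Set Plane) : Prop := ∃ x ∈ A, C = connectedComponentIn A x

/-- Two subsets share a boundary edge if their closures intersect in an infinite set. -/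
def SharesEdge (C D : Set Plane) : Prop := (closure C ∩ closure D).Infinite

/-- `X` strongly deformation retracts onto `A`. -/
def SDR (X A : Set Plane) : Prop :=
  ∃ H : C(↥X × unitInterval, ↥X),
    (∀ x, H (x, 0) = x) ∧ (∀ x, ((H (x, 1) : Plane)) ∈ A) ∧
    (∀ a : ↥X, (a : Plane) ∈ A → ∀ t, H (a, t) = a)

def TPset (P G : Set (ℕ × ℕ)) (ε : ℝ) : Set Plane := thick ε (fg P) ∩ thick (2 * ε) (fg G)
def TNset (P G : Set (ℕ × ℕ)) (ε : ℝ) : Set Plane := (thick ε (fg P))ᶜ ∩ (thick (2 * ε) (fg G))ᶜ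
def FPset (P G : Set (ℕ × ℕ)) (ε : ℝ) : Set Plane := thick ε (fg P) ∩ (thick (2 * ε) (fg G))ᶜ
def FNset (P G : Set (ℕ × ℕ)) (ε : ℝ) : Set Plane := (thick ε (fg P))ᶜ ∩ thick (2 * ε) (fg G)

/-- A component `C` (of `FP` or `FN`) is regular: exactly one component of `TP` and exactly
one component of `TN` share a boundary edge with it. -/
def RegularComp (P G : Set (ℕ × ℕ)) (ε : ℝ) (C : Set Plane) : Prop :=
  (∃! T : Set Plane, IsCompOf T (TPset P G ε) ∧ SharesEdge T C) ∧
  (∃! T : Set Plane, IsCompOf T (TNset P G ε) ∧ SharesEdge T C)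

/-- The zero-loss hypothesis: every component of `FP` and every component of `FN` is regular. -/
def ZeroLoss (P G : Set (ℕ × ℕ)) (ε : ℝ) : Prop :=
  (∀ C : Set Plane, IsCompOf C (FPset P G ε) → RegularComp P G ε C) ∧
  (∀ C : Set Plane, IsCompOf C (FNset P G ε) → RegularComp P G ε C)

namespace DH
open Filter Topology

abbrev E2 : Type := ℝ × ℝ

/-- `f` is affine near `x`. -/
def LAf (f : E2 → ℝ) (x : E2) : Prop :=
  ∃ a b c : ℝ, ∀ᶠ y in 𝓝 x, f y = a * y.1 + b * y.2 + c

/-- generically locally affine function -/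
def GLf (f : E2 → ℝ) : Prop := Dense {x | LAf f x}

lemma isOpen_LAf (f : E2 → ℝ) : IsOpen {x | LAf f x} := by
  rw [isOpen_iff_mem_nhds]
  rintro x ⟨a, b, c, h⟩
  filter_upwards [h.eventually_nhds] with y hy
  exact ⟨a, b, c, hy⟩

lemma dense_two {f g : E2 → ℝ} (hf : GLf f) (hg : GLf g) :
    Dense ({x | LAf f x} ∩ {x | LAf g x}) :=
  hf.inter_of_isOpen_left hg (isOpen_LAf f)

lemma GLf_affine (a b c : ℝ) : GLf (fun y => a * y.1 + b * y.2 + c) := by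
  intro x
  exact subset_closure ⟨a, b, c, Eventually.of_forall fun _ => rfl⟩

lemma GLf.add {f g : E2 → ℝ} (hf : GLf f) (hg : GLf g) : GLf (fun y => f y + g y) := by
  refine (dense_two hf hg).mono ?_
  rintro x ⟨⟨a, b, c, h⟩, ⟨a', b', c', h'⟩⟩
  refine ⟨a + a', b + b', c + c', ?_⟩
  filter_upwards [h, h'] with y h1 h2
  rw [h1, h2]; ring

lemma GLf.smul {f : E2 → ℝ} (k : ℝ) (hf : GLf f) : GLf (fun y => k * f y) := by
  refine hf.mono ?_
  rintro x ⟨a, b, c, h⟩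
  refine ⟨k * a, k * b, k * c, ?_⟩
  filter_upwards [h] with y h1
  rw [h1]; ring

lemma GLf.max {f g : E2 → ℝ} (hf : GLf f) (hg : GLf g) : GLf (fun y => max (f y) (g y)) := by
  rw [GLf, dense_iff_inter_open]
  intro U hU hne
  obtain ⟨x, hxU, ⟨a, b, c, h⟩, ⟨a', b', c', h'⟩⟩ :=
    (dense_two hf hg).inter_open_nonempty U hU hne
  by_cases hc : ∀ᶠ y in 𝓝 x, a * y.1 + b * y.2 + c = a' * y.1 + b' * y.2 + c'
  · refine ⟨x, hxU, a, b, c, ?_⟩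
    filter_upwards [h, h', hc] with y h1 h2 h3
    rw [h1, h2, h3, max_self]
  · have hfr : ∃ᶠ y in 𝓝 x, a * y.1 + b * y.2 + c ≠ a' * y.1 + b' * y.2 + c' :=
      not_eventually.mp hc
    obtain ⟨y, hne, ⟨hyU, hy1, hy2⟩⟩ := (hfr.and_eventually
      ((hU.eventually_mem hxU).and (h.eventually_nhds.and h'.eventually_nhds))).exists
    have c1 : Continuous (fun y : E2 => a * y.1 + b * y.2 + c) := by fun_prop
    have c2 : Continuous (fun y : E2 => a' * y.1 + b' * y.2 + c') := by fun_prop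
    rcases lt_or_gt_of_ne hne with hlt | hlt
    · refine ⟨y, hyU, a', b', c', ?_⟩
      filter_upwards [hy1, hy2, (isOpen_lt c1 c2).mem_nhds hlt] with z h1 h2 h3
      rw [h1, h2]; exact max_eq_right (le_of_lt h3)
    · refine ⟨y, hyU, a, b, c, ?_⟩
      filter_upwards [hy1, hy2, (isOpen_lt c2 c1).mem_nhds hlt] with z h1 h2 h3
      rw [h1, h2]; exact max_eq_left (le_of_lt h3)

lemma GLf.min {f g : E2 → ℝ} (hf : GLf f) (hg : GLf g) : GLf (fun y => min (f y) (g y)) := by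
  have := ((hf.smul (-1)).max (hg.smul (-1))).smul (-1)
  convert this using 2 with y
  rcases le_total (f y) (g y) with h | h
  · rw [min_eq_left h, max_eq_left (by linarith)]; ring
  · rw [min_eq_right h, max_eq_right (by linarith)]; ring

/-- map locally affine at a point -/
def LAm (f : E2 → E2) (x : E2) : Prop :=
  ∃ (L : E2 →L[ℝ] E2) (v : E2), ∀ᶠ y in 𝓝 x, f y = L y + v

def Good (Φ : E2 ≃ₜ E2) : Prop := Dense {x | LAm Φ x}

lemma isOpen_LAm (f : E2 → E2) : IsOpen {x | LAm f x} := by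
  rw [isOpen_iff_mem_nhds]
  rintro x ⟨a, b, h⟩
  filter_upwards [h.eventually_nhds] with y hy
  exact ⟨a, b, hy⟩

lemma Good.of_affine (Φ : E2 ≃ₜ E2) (L : E2 →L[ℝ] E2) (v : E2) (h : ∀ y, Φ y = L y + v) :
    Good Φ := fun _ => subset_closure ⟨L, v, Eventually.of_forall h⟩

lemma Good.trans {Φ Ψ : E2 ≃ₜ E2} (h1 : Good Φ) (h2 : Good Ψ) : Good (Φ.trans Ψ) := by
  have hd : Dense (Φ ⁻¹' {x | LAm Ψ x}) := by
    have := h2.preimage Φ.isOpenMap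
    exact this
  refine (h1.inter_of_isOpen_left hd (isOpen_LAm _)).mono ?_
  rintro x ⟨⟨L, v, hx⟩, ⟨M, w, hy⟩⟩
  refine ⟨M.comp L, M v + w, ?_⟩
  filter_upwards [hx, Φ.continuous.continuousAt.eventually hy] with z h3 h4
  simp only [Homeomorph.trans_apply, h4]
  rw [h3]; simp [add_assoc]

lemma Good.refl : Good (Homeomorph.refl E2) :=
  Good.of_affine _ (ContinuousLinearMap.id ℝ E2) 0 (by intro y; simp)

lemma Good.of_comp {Φ : E2 ≃ₜ E2} (h1 : GLf (fun y => (Φ y).1)) (h2 : GLf (fun y => (Φ y).2)) :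
    Good Φ := by
  refine (dense_two h1 h2).mono ?_
  rintro x ⟨⟨a, b, c, h⟩, ⟨a', b', c', h'⟩⟩
  refine ⟨(a • ContinuousLinearMap.fst ℝ ℝ ℝ + b • ContinuousLinearMap.snd ℝ ℝ ℝ).prod
    (a' • ContinuousLinearMap.fst ℝ ℝ ℝ + b' • ContinuousLinearMap.snd ℝ ℝ ℝ), (c, c'), ?_⟩
  filter_upwards [h, h'] with y h1 h2
  ext
  · simp [h1]
  · simp [h2]

/-- an affine homeomorphism given by 2x2 matrix coefficients and its inverse. -/
def affH (a b c d p q : ℝ) (hD : a * d - b * c ≠ 0) : E2 ≃ₜ E2 where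
  toFun z := (p + a * z.1 + b * z.2, q + c * z.1 + d * z.2)
  invFun z := ((d * (z.1 - p) - b * (z.2 - q)) / (a * d - b * c),
    (a * (z.2 - q) - c * (z.1 - p)) / (a * d - b * c))
  left_inv z := by
    ext
    · simp only; rw [div_eq_iff hD]; ring
    · simp only; rw [div_eq_iff hD]; ring
  right_inv z := by
    have e1 : ∀ r u X Y D : ℝ, r * (X / D) + u * (Y / D) = (r * X + u * Y) / D := by
      intros; ring
    ext
    · simp only
      rw [add_assoc, e1, ← eq_sub_iff_add_eq', div_eq_iff hD]; ring
    · simp only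
      rw [add_assoc, e1, ← eq_sub_iff_add_eq', div_eq_iff hD]; ring
  continuous_toFun := by fun_prop
  continuous_invFun := by fun_prop

lemma affH_apply (a b c d p q : ℝ) (hD : a * d - b * c ≠ 0) (z : E2) :
    affH a b c d p q hD z = (p + a * z.1 + b * z.2, q + c * z.1 + d * z.2) := rfl

lemma affH_good (a b c d p q : ℝ) (hD) : Good (affH a b c d p q hD) := by
  apply Good.of_comp
  · convert GLf_affine a b p using 2 with y
    simp [affH_apply]; ring
  · convert GLf_affine c d q using 2 with y
    simp [affH_apply]; ring

lemma affH_symm_good (a b c d p q : ℝ) (hD) : Good (affH a b c d p q hD).symm := by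
  apply Good.of_comp
  · convert GLf_affine (d / (a * d - b * c)) (-b / (a * d - b * c))
      ((-d * p + b * q) / (a * d - b * c)) using 2 with y
    change (d * (y.1 - p) - b * (y.2 - q)) / (a * d - b * c) = _
    field_simp; ring
  · convert GLf_affine (-c / (a * d - b * c)) (a / (a * d - b * c))
      ((c * p - a * q) / (a * d - b * c)) using 2 with y
    change (a * (y.2 - q) - c * (y.1 - p)) / (a * d - b * c) = _
    field_simp; ring

/-- the model triangle move -/
def triFun (k : ℝ) (z : E2) : E2 :=
  (z.1, min z.2 (max (k * (z.2 - (1 - max z.1 (-z.1)))) (k⁻¹ * (z.2 - (1 - max z.1 (-z.1))))))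

def triInv (k : ℝ) (z : E2) : E2 :=
  (z.1, max z.2 (min ((1 - max z.1 (-z.1)) + k⁻¹ * z.2) ((1 - max z.1 (-z.1)) + k * z.2)))

lemma minmax_aux (k s l : ℝ) (hk : 0 < k) :
    max (min s (max (k * (s - l)) (k⁻¹ * (s - l))))
      (min (l + k⁻¹ * (min s (max (k * (s - l)) (k⁻¹ * (s - l)))))
        (l + k * (min s (max (k * (s - l)) (k⁻¹ * (s - l)))))) = s := by
  have hk' : 0 < k⁻¹ := inv_pos.mpr hk
  set F := max (k * (s - l)) (k⁻¹ * (s - l)) with hF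
  have key : ∀ t, min (l + k⁻¹ * t) (l + k * t) ≤ s ↔ t ≤ F := by
    intro t
    rw [hF, min_le_iff, le_max_iff]
    have e1 : l + k⁻¹ * t ≤ s ↔ t ≤ k * (s - l) := by
      rw [← sub_nonneg, ← sub_nonneg (b := t)]
      have : k * (s - l) - t = k * (s - (l + k⁻¹ * t)) := by field_simp; ring
      rw [this]; constructor
      · intro h; positivity
      · intro h; exact nonneg_of_mul_nonneg_right h hk
    have e2 : l + k * t ≤ s ↔ t ≤ k⁻¹ * (s - l) := by
      rw [← sub_nonneg, ← sub_nonneg (b := t)]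
      have : k⁻¹ * (s - l) - t = k⁻¹ * (s - (l + k * t)) := by field_simp; ring
      rw [this]; constructor
      · intro h; positivity
      · intro h; exact nonneg_of_mul_nonneg_right h hk'
    rw [e1, e2]
  have key2 : s ≤ min (l + k⁻¹ * F) (l + k * F) := by
    have h1 : k * (s - l) ≤ F := le_max_left _ _
    have h2 : k⁻¹ * (s - l) ≤ F := le_max_right _ _
    refine le_min ?_ ?_
    · have := mul_le_mul_of_nonneg_left h1 hk'.le
      rw [← mul_assoc, inv_mul_cancel₀ hk.ne'] at this; linarith
    · have := mul_le_mul_of_nonneg_left h2 hk.le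
      rw [← mul_assoc, mul_inv_cancel₀ hk.ne'] at this; linarith
  rcases le_total s F with h | h
  · rw [min_eq_left h]; exact max_eq_left ((key s).mpr h)
  · rw [min_eq_right h]
    have := (key F).mpr le_rfl
    rw [le_antisymm this key2]; exact max_eq_right h

lemma minmax_aux2 (k s l : ℝ) (hk : 0 < k) :
    min (max s (min (l + k⁻¹ * s) (l + k * s)))
      (max (k * ((max s (min (l + k⁻¹ * s) (l + k * s))) - l))
       (k⁻¹ * ((max s (min (l + k⁻¹ * s) (l + k * s))) - l))) = s := by
  have hk' : 0 < k⁻¹ := inv_pos.mpr hk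
  have c1 : ∀ t, k * (k⁻¹ * t) = t := fun t => by field_simp
  have c2 : ∀ t, k⁻¹ * (k * t) = t := fun t => by field_simp
  rcases le_total (l + k⁻¹ * s) (l + k * s) with h | h
  · rw [min_eq_left h]
    rcases le_total s (l + k⁻¹ * s) with h2 | h2
    · rw [max_eq_right h2, add_sub_cancel_left, c1]
      have : k⁻¹ * (k⁻¹ * s) ≤ s := by
        have := mul_le_mul_of_nonneg_left (by linarith : k⁻¹ * s ≤ k * s) hk'.le
        rwa [c2] at this
      rw [max_eq_left this, min_eq_right h2]
    · rw [max_eq_left h2]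
      refine min_eq_left (le_max_of_le_left ?_)
      have := mul_le_mul_of_nonneg_left (by linarith : k⁻¹ * s ≤ s - l) hk.le
      rwa [c1] at this
  · rw [min_eq_right h]
    rcases le_total s (l + k * s) with h2 | h2
    · rw [max_eq_right h2, add_sub_cancel_left, c2]
      have : k * (k * s) ≤ s := by
        have := mul_le_mul_of_nonneg_left (by linarith : k * s ≤ k⁻¹ * s) hk.le
        rwa [c1] at this
      rw [max_eq_right this, min_eq_right h2]
    · rw [max_eq_left h2]
      refine min_eq_left (le_max_of_le_right ?_)
      have := mul_le_mul_of_nonneg_left (by linarith : k * s ≤ s - l) hk'.le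
      rwa [c2] at this

def triH (k : ℝ) (hk : 0 < k) : E2 ≃ₜ E2 where
  toFun := triFun k
  invFun := triInv k
  left_inv z := Prod.ext rfl (minmax_aux k _ _ hk)
  right_inv z := Prod.ext rfl (minmax_aux2 k _ _ hk)
  continuous_toFun := by unfold triFun; fun_prop
  continuous_invFun := by unfold triInv; fun_prop

lemma triH_good (k : ℝ) (hk : 0 < k) : Good (triH k hk) := by
  have g1 : GLf (fun y => y.1) := by
    convert GLf_affine 1 0 0 using 2 with y; ring
  have g1' : GLf (fun y => -y.1) := by
    convert GLf_affine (-1) 0 0 using 2 with y; ring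
  have g2 : GLf (fun y => y.2) := by
    convert GLf_affine 0 1 0 using 2 with y; ring
  have gl : GLf (fun y => y.2 - (1 - max y.1 (-y.1))) := by
    convert (GLf_affine 0 1 (-1)).add (g1.max g1') using 2 with y; ring
  apply Good.of_comp
  · exact g1
  · exact g2.min ((gl.smul k).max (gl.smul k⁻¹))

/-- the model triangle lemma -/
lemma tri_model (α : ℝ) (hα : 0 < α) : ∃ Φ : E2 ≃ₜ E2, Good Φ ∧
    (∀ u s : ℝ, ¬ (-α * (1 - |u|) ≤ s ∧ s ≤ (1 + α) * (1 - |u|)) → Φ (u, s) = (u, s)) ∧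
    ∀ A : Set E2, (∀ u s : ℝ, 0 < s → s ≤ (1 + α) * (1 - |u|) → (u, s) ∉ A) →
      (∀ u s : ℝ, s ≤ 0 → -α * (1 - |u|) ≤ s → (u, s) ∈ A) →
      Φ '' (A ∪ {z | 0 ≤ z.2 ∧ z.2 ≤ 1 - |z.1|}) = A := by
  have h1α : 0 < 1 + α := by linarith
  have hk : 0 < α / (1 + α) := by positivity
  set k := α / (1 + α) with hkd
  have hα1 : k * (1 + α) = α := by rw [hkd]; field_simp
  have hki : k⁻¹ = (1 + α) / α := by rw [hkd, inv_div]
  have hki1 : k⁻¹ * α = 1 + α := by rw [hki]; field_simp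
  have hk1 : k < 1 := by rw [hkd, div_lt_one h1α]; linarith
  have hki2 : 1 < k⁻¹ := (one_lt_inv₀ hk).mpr hk1
  have app : ∀ u s, triH k hk (u, s) =
    (u, min s (max (k * (s - (1 - |u|))) (k⁻¹ * (s - (1 - |u|))))) := by
    intro u s
    rfl
  have id1 : ∀ u s : ℝ, ¬ (-α * (1 - |u|) ≤ s ∧ s ≤ (1 + α) * (1 - |u|)) →
      triH k hk (u, s) = (u, s) := by
    intro u s h
    rw [app]
    congr 1
    generalize 1 - |u| = l at h
    apply min_eq_left
    rw [not_and_or] at h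
    rw [le_max_iff]
    rcases h with h | h
    · left
      have : (1 + α) * (s - k * (s - l)) ≤ 0 := by
        have : (1 + α) * (s - k * (s - l)) = (1+α) * s - (k * (1+α)) * (s - l) := by ring
        rw [this, hα1]; linarith
      nlinarith
    · right
      have : α * (s - k⁻¹ * (s - l)) ≤ 0 := by
        have : α * (s - k⁻¹ * (s - l)) = α * s - (k⁻¹ * α) * (s - l) := by ring
        rw [this, hki1]; linarith
      nlinarith
  refine ⟨triH k hk, triH_good k hk, id1, ?_⟩
  intro A h1 h2
  have key : ∀ z : E2, z ∈ (A ∪ {z | 0 ≤ z.2 ∧ z.2 ≤ 1 - |z.1|}) ↔ triH k hk z ∈ A := by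
    rintro ⟨u, s⟩
    by_cases hK : -α * (1 - |u|) ≤ s ∧ s ≤ (1 + α) * (1 - |u|)
    · have hl : 0 ≤ 1 - |u| := by nlinarith
      have low : ∀ c, min s c = c → c = k * (s - (1 - |u|)) → -α * (1 - |u|) ≤ c := by
        intro c _ hc
        rw [hc]
        have : (1 + α) * (k * (s - (1 - |u|))) = α * (s - (1 - |u|)) := by
            rw [← mul_assoc, mul_comm _ k, hα1]
        nlinarith
      rw [app]
      rcases le_or_gt s (1 - |u|) with hs | hs
      · have hmx : max (k * (s - (1 - |u|))) (k⁻¹ * (s - (1 - |u|))) = k * (s - (1 - |u|)) := by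
          apply max_eq_left; nlinarith
        rw [hmx]
        have h3 : k * (s - (1 - |u|)) ≤ s := by
          have : (1 + α) * (k * (s - (1 - |u|))) = α * (s - (1 - |u|)) := by
            rw [← mul_assoc, mul_comm _ k, hα1]
          nlinarith
        rw [min_eq_right h3]
        refine iff_of_true ?_ (h2 _ _ ?_ (low _ (min_eq_right h3) rfl))
        · rcases le_or_gt s 0 with h0 | h0
          · exact Or.inl (h2 _ _ h0 hK.1)
          · exact Or.inr ⟨h0.le, hs⟩
        · nlinarith
      · have hmx : max (k * (s - (1 - |u|))) (k⁻¹ * (s - (1 - |u|))) = k⁻¹ * (s - (1 - |u|)) := by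
          apply max_eq_right; nlinarith
        rw [hmx]
        refine iff_of_false ?_ (h1 _ _ ?_ ((min_le_left _ _).trans hK.2))
        · rintro (h | h)
          · exact h1 _ _ (by linarith) hK.2 h
          · exact absurd h.2 (not_le.mpr hs)
        · refine lt_min (by linarith) (mul_pos (by linarith) (by linarith))
    · rw [id1 u s hK]
      refine ⟨fun h => h.resolve_right ?_, Or.inl⟩
      rintro ⟨h3, h4⟩
      simp only at h3 h4
      apply hK
      constructor <;> nlinarith
  ext z
  constructor
  · rintro ⟨y, hy, rfl⟩
    exact (key y).mp hy
  · intro hz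
    refine ⟨(triH k hk).symm z, (key _).mpr ?_, ?_⟩ <;> simp [hz]

end DH

namespace DH
open Filter Topology

/-- conjugation of a supported move by an affine homeomorphism. -/
lemma conj_image (M T : E2 ≃ₜ E2) (A D : Set E2) (h : T '' (M ⁻¹' A ∪ D) = M ⁻¹' A) :
    (M.symm.trans (T.trans M)) '' (A ∪ M '' D) = A := by
  have e : A ∪ M '' D = M '' (M ⁻¹' A ∪ D) := by
    rw [image_union, image_preimage_eq _ M.surjective]
  rw [e, image_image]
  have : (fun x => (M.symm.trans (T.trans M)) (M x)) = fun x => M (T x) := by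
    ext x <;> simp
  rw [this, ← image_image (g := M) (f := T), h, image_preimage_eq _ M.surjective]

lemma conj_good {M T : E2 ≃ₜ E2} (hM : Good M) (hM' : Good M.symm) (hT : Good T) :
    Good (M.symm.trans (T.trans M)) := hM'.trans (hT.trans hM)

lemma attach_unit (α : ℝ) (hα : 0 < α) (hα1 : α ≤ 1) : ∃ Φ : E2 ≃ₜ E2, Good Φ ∧
    (∀ x y : ℝ, ¬ (-α ≤ x ∧ x ≤ 1 + α ∧ -α ≤ y ∧ y ≤ 1 + α) → Φ (x, y) = (x, y)) ∧
    ∀ A : Set E2, (∀ x y : ℝ, -α ≤ x → x < 1 → -α ≤ y → y ≤ 1 + α → (x, y) ∉ A) →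
      (∀ x y : ℝ, 1 ≤ x → x ≤ 1 + α → 0 ≤ y → y ≤ 1 → (x, y) ∈ A) →
      Φ '' (A ∪ Icc 0 1 ×ˢ Icc 0 1) = A := by
  obtain ⟨T, hT, hTid, hTA⟩ := tri_model α hα
  set M1 := affH (1/2) (-1/2) (1/2) (1/2) (1/2) (1/2) (by norm_num) with hM1
  set M2 := affH 0 (-1) (1/2) (-1/2) 1 (1/2) (by norm_num) with hM2
  have s1 : ∀ x y : ℝ, M1.symm (x, y) = (x + y - 1, y - x) := by
    intro x y; rw [Homeomorph.symm_apply_eq, hM1, affH_apply]; ext <;> simp <;> ring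
  have s2 : ∀ x y : ℝ, M2.symm (x, y) = (2 * y - x, 1 - x) := by
    intro x y; rw [Homeomorph.symm_apply_eq, hM2, affH_apply]; ext <;> simp <;> ring
  have kb : ∀ u s : ℝ, (-α * (1 - |u|) ≤ s ∧ s ≤ (1 + α) * (1 - |u|)) →
      |u| ≤ 1 ∧ -(1 - |u|) ≤ s ∧ -α ≤ s ∧ s ≤ (1 - |u|) + α := by
    intro u s h
    have h0 : |u| ≤ 1 := by nlinarith
    have := abs_nonneg u
    refine ⟨h0, ?_, ?_, ?_⟩ <;> nlinarith
  refine ⟨(M1.symm.trans (T.trans M1)).trans (M2.symm.trans (T.trans M2)),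
    (conj_good (affH_good _ _ _ _ _ _ _) (affH_symm_good _ _ _ _ _ _ _) hT).trans
    (conj_good (affH_good _ _ _ _ _ _ _) (affH_symm_good _ _ _ _ _ _ _) hT), ?_, ?_⟩
  · intro x y h
    have e1 : (M1.symm.trans (T.trans M1)) (x, y) = (x, y) := by
      simp only [Homeomorph.trans_apply]
      rw [s1, hTid, ← s1, Homeomorph.apply_symm_apply]
      intro hk
      obtain ⟨k1, k2, k3, k4⟩ := kb _ _ hk
      have := neg_abs_le (x + y - 1)
      have := le_abs_self (x + y - 1)
      apply h
      refine ⟨?_, ?_, ?_, ?_⟩ <;> linarith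
    have e2 : (M2.symm.trans (T.trans M2)) (x, y) = (x, y) := by
      simp only [Homeomorph.trans_apply]
      rw [s2, hTid, ← s2, Homeomorph.apply_symm_apply]
      intro hk
      obtain ⟨k1, k2, k3, k4⟩ := kb _ _ hk
      have := neg_abs_le (2 * y - x)
      have := le_abs_self (2 * y - x)
      apply h
      refine ⟨?_, ?_, ?_, ?_⟩ <;> linarith
    rw [Homeomorph.trans_apply, e1, e2]
  · intro A h1 h2
    set Δ : Set E2 := {z | 0 ≤ z.2 ∧ z.2 ≤ 1 - |z.1|} with hΔ
    have d1 : M1 '' Δ = {z : E2 | z.1 ≤ z.2 ∧ z.2 ≤ 1 ∧ 0 ≤ z.1} := by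
      rw [← Homeomorph.preimage_symm]
      ext ⟨x, y⟩
      simp only [mem_preimage, s1, hΔ, mem_ofPred_eq]
      constructor
      · rintro ⟨a, b⟩
        have := neg_abs_le (x + y - 1)
        have := le_abs_self (x + y - 1)
        refine ⟨?_, ?_, ?_⟩ <;> linarith
      · rintro ⟨a, b, c⟩
        refine ⟨by linarith, ?_⟩
        rw [le_sub_comm, abs_le]
        constructor <;> linarith
    have d2 : M2 '' Δ = {z : E2 | 0 ≤ z.2 ∧ z.2 ≤ z.1 ∧ z.1 ≤ 1} := by
      rw [← Homeomorph.preimage_symm]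
      ext ⟨x, y⟩
      simp only [mem_preimage, s2, hΔ, mem_ofPred_eq]
      constructor
      · rintro ⟨a, b⟩
        have := neg_abs_le (2 * y - x)
        have := le_abs_self (2 * y - x)
        refine ⟨?_, ?_, ?_⟩ <;> linarith
      · rintro ⟨a, b, c⟩
        refine ⟨by linarith, ?_⟩
        rw [le_sub_comm, abs_le]
        constructor <;> linarith
    have hQ : A ∪ Icc 0 1 ×ˢ Icc 0 1 = (A ∪ M2 '' Δ) ∪ M1 '' Δ := by
      rw [d1, d2, union_assoc]
      congr 1
      ext ⟨x, y⟩
      simp only [mem_prod, mem_Icc, mem_union, mem_ofPred_eq]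
      constructor
      · rintro ⟨⟨a, b⟩, c, d⟩
        rcases le_total x y with h | h
        · right; exact ⟨h, d, a⟩
        · left; exact ⟨c, h, b⟩
      · rintro (⟨a, b, c⟩ | ⟨a, b, c⟩) <;> refine ⟨⟨?_, ?_⟩, ?_, ?_⟩ <;> linarith
    have m1 : ∀ u s : ℝ, M1 (u, s) = ((1 + u - s) / 2, (1 + u + s) / 2) := by
      intro u s; rw [hM1, affH_apply]; ext <;> simp <;> ring
    have m2 : ∀ u s : ℝ, M2 (u, s) = (1 - s, (1 + u - s) / 2) := by
      intro u s; rw [hM2, affH_apply]; ext <;> simp <;> ring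
    have r1 : (M1.symm.trans (T.trans M1)) '' ((A ∪ M2 '' Δ) ∪ M1 '' Δ) = A ∪ M2 '' Δ := by
      apply conj_image
      apply hTA
      · intro u s hs hs'
        obtain ⟨k1, k2, k3, k4⟩ := kb u s ⟨by nlinarith, hs'⟩
        have := neg_abs_le u
        have := le_abs_self u
        rw [mem_preimage, m1, d2]
        rintro (h | ⟨a, b, c⟩)
        · refine h1 _ _ ?_ ?_ ?_ ?_ h <;> linarith
        · simp only at b; linarith
      · intro u s hs hs'
        obtain ⟨k1, k2, k3, k4⟩ := kb u s ⟨hs', by nlinarith⟩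
        have := neg_abs_le u
        have := le_abs_self u
        rw [mem_preimage, m1, d2]
        right
        refine ⟨?_, ?_, ?_⟩ <;> simp only <;> linarith
    have r2 : (M2.symm.trans (T.trans M2)) '' (A ∪ M2 '' Δ) = A := by
      apply conj_image
      apply hTA
      · intro u s hs hs'
        obtain ⟨k1, k2, k3, k4⟩ := kb u s ⟨by nlinarith, hs'⟩
        have := neg_abs_le u
        have := le_abs_self u
        rw [mem_preimage, m2]
        refine h1 _ _ ?_ ?_ ?_ ?_ <;> linarith
      · intro u s hs hs'
        obtain ⟨k1, k2, k3, k4⟩ := kb u s ⟨hs', by nlinarith⟩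
        have := neg_abs_le u
        have := le_abs_self u
        rw [mem_preimage, m2]
        refine h2 _ _ ?_ ?_ ?_ ?_ <;> linarith
    rw [hQ]
    have : ∀ X : Set E2, ((M1.symm.trans (T.trans M1)).trans (M2.symm.trans (T.trans M2))) '' X =
      (M2.symm.trans (T.trans M2)) '' ((M1.symm.trans (T.trans M1)) '' X) := by
      intro X; rw [image_image]; rfl
    rw [this, r1, r2]

/-- general rectangle attachment, with affine coordinates `M`. -/
lemma attach_gen (M : E2 ≃ₜ E2) (hM : Good M) (hM' : Good M.symm) (α : ℝ) (hα : 0 < α)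
    (hα1 : α ≤ 1) : ∃ Φ : E2 ≃ₜ E2, Good Φ ∧
    (∀ x y : ℝ, ¬ (-α ≤ x ∧ x ≤ 1 + α ∧ -α ≤ y ∧ y ≤ 1 + α) → Φ (M (x, y)) = M (x, y)) ∧
    ∀ A : Set E2, (∀ x y : ℝ, -α ≤ x → x < 1 → -α ≤ y → y ≤ 1 + α → M (x, y) ∉ A) →
      (∀ x y : ℝ, 1 ≤ x → x ≤ 1 + α → 0 ≤ y → y ≤ 1 → M (x, y) ∈ A) →
      Φ '' (A ∪ M '' (Icc 0 1 ×ˢ Icc 0 1)) = A := by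
  obtain ⟨Φ, h1, h2, h3⟩ := attach_unit α hα hα1
  refine ⟨M.symm.trans (Φ.trans M), conj_good hM hM' h1, ?_, ?_⟩
  · intro x y h
    simp [h2 x y h]
  · intro A ha hb
    exact conj_image _ _ _ _ (h3 _ ha hb)

lemma scale_le {a w d x : ℝ} (hw : 0 < w) : (x - a) / w ≤ d ↔ x ≤ a + d * w := by
  rw [div_le_iff₀ hw]; constructor <;> intro h <;> linarith
lemma le_scale {a w d x : ℝ} (hw : 0 < w) : d ≤ (x - a) / w ↔ a + d * w ≤ x := by
  rw [le_div_iff₀ hw]; constructor <;> intro h <;> linarith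

lemma exists_alpha (w h δ : ℝ) (hw : 0 < w) (hh : 0 < h) (hδ : 0 < δ) :
    ∃ α : ℝ, 0 < α ∧ α ≤ 1 ∧ α * w ≤ δ ∧ α * h ≤ δ := by
  refine ⟨min 1 (min (δ / w) (δ / h)), by positivity, min_le_left _ _, ?_, ?_⟩
  · rw [← le_div_iff₀ hw]; exact (min_le_right _ _).trans (min_le_left _ _)
  · rw [← le_div_iff₀ hh]; exact (min_le_right _ _).trans (min_le_right _ _)

/-- Rectangle `[x0,x1]×[y0,y1]` attached to `A` along its east side. -/
lemma attachE (x0 x1 y0 y1 δ : ℝ) (hx : x0 < x1) (hy : y0 < y1) (hδ : 0 < δ) :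
    ∃ Φ : E2 ≃ₜ E2, Good Φ ∧
    (∀ x y : ℝ, ¬ (x0 - δ ≤ x ∧ x ≤ x1 + δ ∧ y0 - δ ≤ y ∧ y ≤ y1 + δ) → Φ (x, y) = (x, y)) ∧
    ∀ A : Set E2, (∀ x y : ℝ, x0 - δ ≤ x → x < x1 → y0 - δ ≤ y → y ≤ y1 + δ → (x, y) ∉ A) →
      (∀ x y : ℝ, x1 ≤ x → x ≤ x1 + δ → y0 ≤ y → y ≤ y1 → (x, y) ∈ A) →
      Φ '' (A ∪ Icc x0 x1 ×ˢ Icc y0 y1) = A := by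
  have hw : 0 < x1 - x0 := by linarith
  have hh : 0 < y1 - y0 := by linarith
  obtain ⟨α, a1, a2, a3, a4⟩ := exists_alpha _ _ δ hw hh hδ
  have hD : (x1 - x0) * (y1 - y0) - 0 * 0 ≠ 0 := by
    have := mul_pos hw hh; simpa using this.ne'
  set M := affH (x1 - x0) 0 0 (y1 - y0) x0 y0 hD with hMd
  obtain ⟨Φ, h1, h2, h3⟩ := attach_gen M (affH_good _ _ _ _ _ _ _) (affH_symm_good _ _ _ _ _ _ _) α a1 a2
  have m : ∀ x y : ℝ, M (x, y) = (x0 + x * (x1 - x0), y0 + y * (y1 - y0)) := by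
    intro x y; rw [hMd, affH_apply]; ext <;> simp <;> ring
  have ms : ∀ x y : ℝ, M.symm (x, y) = ((x - x0) / (x1 - x0), (y - y0) / (y1 - y0)) := by
    intro x y; rw [Homeomorph.symm_apply_eq, m]; ext <;> field_simp <;> ring
  have im : M '' (Icc 0 1 ×ˢ Icc 0 1) = Icc x0 x1 ×ˢ Icc y0 y1 := by
    rw [← Homeomorph.preimage_symm]
    ext ⟨x, y⟩
    simp only [mem_preimage, ms, mem_prod, mem_Icc, scale_le hw, scale_le hh, le_scale hw, le_scale hh]
    simp
  refine ⟨Φ, h1, ?_, ?_⟩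
  · intro x y h
    have := h2 (M.symm (x, y)).1 (M.symm (x, y)).2 ?_
    · simpa using this
    · rw [ms]; simp only [scale_le hw, scale_le hh, le_scale hw, le_scale hh]
      rintro ⟨b1, b2, b3, b4⟩
      apply h; refine ⟨?_, ?_, ?_, ?_⟩ <;> linarith
  · intro A hA hB
    rw [← im]
    apply h3
    · intro x y b1 b2 b3 b4
      rw [m]
      refine hA _ _ ?_ ?_ ?_ ?_ <;> nlinarith
    · intro x y b1 b2 b3 b4
      rw [m]
      refine hB _ _ ?_ ?_ ?_ ?_ <;> nlinarith

/-- Transport of an attachment along an affine involution. -/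
lemma conj_image' (σ Φ : E2 ≃ₜ E2) (A Q Q' : Set E2) (hQ : σ '' Q' = Q)
    (h : Φ '' (σ ⁻¹' A ∪ Q') = σ ⁻¹' A) : (σ.symm.trans (Φ.trans σ)) '' (A ∪ Q) = A := by
  rw [← hQ]; exact conj_image _ _ _ _ h

lemma attachW (x0 x1 y0 y1 δ : ℝ) (hx : x0 < x1) (hy : y0 < y1) (hδ : 0 < δ) :
    ∃ Φ : E2 ≃ₜ E2, Good Φ ∧
    (∀ x y : ℝ, ¬ (x0 - δ ≤ x ∧ x ≤ x1 + δ ∧ y0 - δ ≤ y ∧ y ≤ y1 + δ) → Φ (x, y) = (x, y)) ∧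
    ∀ A : Set E2, (∀ x y : ℝ, x0 < x → x ≤ x1 + δ → y0 - δ ≤ y → y ≤ y1 + δ → (x, y) ∉ A) →
      (∀ x y : ℝ, x0 - δ ≤ x → x ≤ x0 → y0 ≤ y → y ≤ y1 → (x, y) ∈ A) →
      Φ '' (A ∪ Icc x0 x1 ×ˢ Icc y0 y1) = A := by
  obtain ⟨Φ, h1, h2, h3⟩ := attachE (-x1) (-x0) y0 y1 δ (by linarith) hy hδ
  set σ := affH (-1) 0 0 1 0 0 (by norm_num) with hσ
  have m : ∀ x y : ℝ, σ (x, y) = (-x, y) := by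
    intro x y; rw [hσ, affH_apply]; ext <;> simp
  have ms : ∀ x y : ℝ, σ.symm (x, y) = (-x, y) := by
    intro x y; rw [Homeomorph.symm_apply_eq, m]; simp
  refine ⟨σ.symm.trans (Φ.trans σ), conj_good (affH_good _ _ _ _ _ _ _) (affH_symm_good _ _ _ _ _ _ _) h1, ?_, ?_⟩
  · intro x y h
    simp only [Homeomorph.trans_apply, ms]
    rw [h2, m, neg_neg]
    rintro ⟨b1, b2, b3, b4⟩
    apply h; refine ⟨?_, ?_, ?_, ?_⟩ <;> linarith
  · intro A hA hB
    refine conj_image' σ Φ A _ (Icc (-x1) (-x0) ×ˢ Icc y0 y1) ?_ (h3 _ ?_ ?_)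
    · rw [← Homeomorph.preimage_symm]
      ext ⟨x, y⟩
      simp only [mem_preimage, ms, mem_prod, mem_Icc, neg_le_neg_iff]
      tauto
    · intro x y b1 b2 b3 b4
      rw [mem_preimage, m]
      refine hA _ _ ?_ ?_ ?_ ?_ <;> linarith
    · intro x y b1 b2 b3 b4
      rw [mem_preimage, m]
      refine hB _ _ ?_ ?_ ?_ ?_ <;> linarith

/-- attached along its north side -/
lemma attachN (x0 x1 y0 y1 δ : ℝ) (hx : x0 < x1) (hy : y0 < y1) (hδ : 0 < δ) :
    ∃ Φ : E2 ≃ₜ E2, Good Φ ∧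
    (∀ x y : ℝ, ¬ (x0 - δ ≤ x ∧ x ≤ x1 + δ ∧ y0 - δ ≤ y ∧ y ≤ y1 + δ) → Φ (x, y) = (x, y)) ∧
    ∀ A : Set E2, (∀ x y : ℝ, x0 - δ ≤ x → x ≤ x1 + δ → y0 - δ ≤ y → y < y1 → (x, y) ∉ A) →
      (∀ x y : ℝ, x0 ≤ x → x ≤ x1 → y1 ≤ y → y ≤ y1 + δ → (x, y) ∈ A) →
      Φ '' (A ∪ Icc x0 x1 ×ˢ Icc y0 y1) = A := by
  obtain ⟨Φ, h1, h2, h3⟩ := attachE y0 y1 x0 x1 δ hy hx hδ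
  set σ := affH 0 1 1 0 0 0 (by norm_num) with hσ
  have m : ∀ x y : ℝ, σ (x, y) = (y, x) := by
    intro x y; rw [hσ, affH_apply]; ext <;> simp
  have ms : ∀ x y : ℝ, σ.symm (x, y) = (y, x) := by
    intro x y; rw [Homeomorph.symm_apply_eq, m]
  refine ⟨σ.symm.trans (Φ.trans σ), conj_good (affH_good _ _ _ _ _ _ _) (affH_symm_good _ _ _ _ _ _ _) h1, ?_, ?_⟩
  · intro x y h
    simp only [Homeomorph.trans_apply, ms]
    rw [h2, m]
    rintro ⟨b1, b2, b3, b4⟩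
    exact h ⟨b3, b4, b1, b2⟩
  · intro A hA hB
    refine conj_image' σ Φ A _ (Icc y0 y1 ×ˢ Icc x0 x1) ?_ (h3 _ ?_ ?_)
    · rw [← Homeomorph.preimage_symm]
      ext ⟨x, y⟩
      simp only [mem_preimage, ms, mem_prod]
      tauto
    · intro x y b1 b2 b3 b4
      rw [mem_preimage, m]
      exact hA _ _ b3 b4 b1 b2
    · intro x y b1 b2 b3 b4
      rw [mem_preimage, m]
      exact hB _ _ b3 b4 b1 b2

/-- attached along its south side -/
lemma attachS (x0 x1 y0 y1 δ : ℝ) (hx : x0 < x1) (hy : y0 < y1) (hδ : 0 < δ) :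
    ∃ Φ : E2 ≃ₜ E2, Good Φ ∧
    (∀ x y : ℝ, ¬ (x0 - δ ≤ x ∧ x ≤ x1 + δ ∧ y0 - δ ≤ y ∧ y ≤ y1 + δ) → Φ (x, y) = (x, y)) ∧
    ∀ A : Set E2, (∀ x y : ℝ, x0 - δ ≤ x → x ≤ x1 + δ → y0 < y → y ≤ y1 + δ → (x, y) ∉ A) →
      (∀ x y : ℝ, x0 ≤ x → x ≤ x1 → y0 - δ ≤ y → y ≤ y0 → (x, y) ∈ A) →
      Φ '' (A ∪ Icc x0 x1 ×ˢ Icc y0 y1) = A := by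
  obtain ⟨Φ, h1, h2, h3⟩ := attachW y0 y1 x0 x1 δ hy hx hδ
  set σ := affH 0 1 1 0 0 0 (by norm_num) with hσ
  have m : ∀ x y : ℝ, σ (x, y) = (y, x) := by
    intro x y; rw [hσ, affH_apply]; ext <;> simp
  have ms : ∀ x y : ℝ, σ.symm (x, y) = (y, x) := by
    intro x y; rw [Homeomorph.symm_apply_eq, m]
  refine ⟨σ.symm.trans (Φ.trans σ), conj_good (affH_good _ _ _ _ _ _ _) (affH_symm_good _ _ _ _ _ _ _) h1, ?_, ?_⟩
  · intro x y h
    simp only [Homeomorph.trans_apply, ms]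
    rw [h2, m]
    rintro ⟨b1, b2, b3, b4⟩
    exact h ⟨b3, b4, b1, b2⟩
  · intro A hA hB
    refine conj_image' σ Φ A _ (Icc y0 y1 ×ˢ Icc x0 x1) ?_ (h3 _ ?_ ?_)
    · rw [← Homeomorph.preimage_symm]
      ext ⟨x, y⟩
      simp only [mem_preimage, ms, mem_prod]
      tauto
    · intro x y b1 b2 b3 b4
      rw [mem_preimage, m]
      exact hA _ _ b3 b4 b1 b2
    · intro x y b1 b2 b3 b4
      rw [mem_preimage, m]
      exact hB _ _ b3 b4 b1 b2

/-- Shrink a rectangle to a smaller one inside, with support near the big one. -/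
lemma shrink_rect (x0 x1 y0 y1 x0' x1' y0' y1' δ : ℝ) (hx : x0 < x0') (hx' : x0' < x1')
    (hx'' : x1' < x1) (hy : y0 < y0') (hy' : y0' < y1') (hy'' : y1' < y1) (hδ : 0 < δ) :
    ∃ Φ : E2 ≃ₜ E2, Good Φ ∧
    (∀ x y : ℝ, ¬ (x0 - δ ≤ x ∧ x ≤ x1 + δ ∧ y0 - δ ≤ y ∧ y ≤ y1 + δ) → Φ (x, y) = (x, y)) ∧
      Φ '' (Icc x0 x1 ×ˢ Icc y0 y1) = Icc x0' x1' ×ˢ Icc y0' y1' := by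
  obtain ⟨η, hη, n1, n2, n3, n4⟩ : ∃ η : ℝ, 0 < η ∧ η ≤ δ ∧ η ≤ x1' - x0' ∧ η ≤ y1' - y0' ∧
      η ≤ δ := by
    refine ⟨min δ (min (x1' - x0') (y1' - y0')), ?_, min_le_left _ _,
      (min_le_right _ _).trans (min_le_left _ _), (min_le_right _ _).trans (min_le_right _ _),
      min_le_left _ _⟩
    have : 0 < x1' - x0' := by linarith
    have : 0 < y1' - y0' := by linarith
    positivity
  -- first cut off the west strip, then east, south, north
  obtain ⟨Φ1, a1, b1, c1⟩ := attachE x0 x0' y0 y1 η hx (by linarith) hη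
  obtain ⟨Φ2, a2, b2, c2⟩ := attachW x1' x1 y0 y1 η hx'' (by linarith) hη
  obtain ⟨Φ3, a3, b3, c3⟩ := attachN x0' x1' y0 y0' η hx' hy hη
  obtain ⟨Φ4, a4, b4, c4⟩ := attachS x0' x1' y1' y1 η hx' hy'' hη
  have d1 := c1 (Icc x0' x1 ×ˢ Icc y0 y1) (by
      rintro x y _ h _ _ ⟨h1, _⟩; exact absurd h1.1 (not_le.mpr h))
    (fun x y e1 e2 e3 e4 => ⟨⟨e1, by linarith⟩, e3, e4⟩)
  have d2 := c2 (Icc x0' x1' ×ˢ Icc y0 y1) (by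
      rintro x y h _ _ _ ⟨h1, _⟩; exact absurd h1.2 (not_le.mpr h))
    (fun x y e1 e2 e3 e4 => ⟨⟨by linarith, e2⟩, e3, e4⟩)
  have d3 := c3 (Icc x0' x1' ×ˢ Icc y0' y1) (by
      rintro x y _ _ _ h ⟨_, h1⟩; exact absurd h1.1 (not_le.mpr h))
    (fun x y e1 e2 e3 e4 => ⟨⟨e1, e2⟩, e3, by linarith⟩)
  have d4 := c4 (Icc x0' x1' ×ˢ Icc y0' y1') (by
      rintro x y _ _ h _ ⟨_, h1⟩; exact absurd h1.2 (not_le.mpr h))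
    (fun x y e1 e2 e3 e4 => ⟨⟨e1, e2⟩, by linarith, e4⟩)
  rw [← union_prod, Icc_union_Icc_eq_Icc (by linarith) (by linarith)] at d2
  rw [union_comm, ← union_prod, Icc_union_Icc_eq_Icc (by linarith) (by linarith)] at d1
  rw [← prod_union, Icc_union_Icc_eq_Icc (by linarith) (by linarith)] at d4
  rw [union_comm, ← prod_union, Icc_union_Icc_eq_Icc (by linarith) (by linarith)] at d3
  refine ⟨(Φ1.trans Φ2).trans (Φ3.trans Φ4), (a1.trans a2).trans (a3.trans a4), ?_, ?_⟩
  · intro x y h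
    simp only [Homeomorph.trans_apply]
    rw [b1, b2, b3, b4]
    all_goals
      rintro ⟨e1, e2, e3, e4⟩
      apply h; refine ⟨?_, ?_, ?_, ?_⟩ <;> linarith
  · have : ∀ X : Set E2, ((Φ1.trans Φ2).trans (Φ3.trans Φ4)) '' X =
      Φ4 '' (Φ3 '' (Φ2 '' (Φ1 '' X))) := by
      intro X; simp only [image_image]; rfl
    rw [this, d1, d2, d3, d4]

end DH

namespace DH
open Filter Topology

structure IsGrid (a : ℤ → ℝ) : Prop where
  mono : StrictMono a
  cover : ∀ x : ℝ, ∃ i, a i ≤ x ∧ x < a (i + 1)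

/-- the union of closed cells with index in `X` -/
def R (a : ℤ → ℝ) (X : Set (ℤ × ℤ)) : Set E2 :=
  {z | ∃ i j, (i, j) ∈ X ∧ (a i ≤ z.1 ∧ z.1 ≤ a (i + 1)) ∧ (a j ≤ z.2 ∧ z.2 ≤ a (j + 1))}

def col (i b t : ℤ) : Set (ℤ × ℤ) := {p | p.1 = i ∧ b ≤ p.2 ∧ p.2 < t}

lemma mem_col {i b t k l : ℤ} : (k, l) ∈ col i b t ↔ k = i ∧ b ≤ l ∧ l < t := Iff.rfl

lemma R_union (a : ℤ → ℝ) (X Y : Set (ℤ × ℤ)) : R a (X ∪ Y) = R a X ∪ R a Y := by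
  ext z
  constructor
  · rintro ⟨i, j, h | h, hz⟩
    · exact Or.inl ⟨i, j, h, hz⟩
    · exact Or.inr ⟨i, j, h, hz⟩
  · rintro (⟨i, j, h, hz⟩ | ⟨i, j, h, hz⟩)
    · exact ⟨i, j, Or.inl h, hz⟩
    · exact ⟨i, j, Or.inr h, hz⟩

lemma R_mono (a : ℤ → ℝ) {X Y : Set (ℤ × ℤ)} (h : X ⊆ Y) : R a X ⊆ R a Y := by
  rintro z ⟨i, j, h1, hz⟩
  exact ⟨i, j, h h1, hz⟩

section
variable {a : ℤ → ℝ}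

lemma IsGrid.idx (ha : IsGrid a) {i j k : ℤ} {x : ℝ} (h1 : a i < x) (h2 : x < a j)
    (h3 : a k ≤ x) (h4 : x ≤ a (k + 1)) : i ≤ k ∧ k < j := by
  have := ha.mono.lt_iff_lt.mp (h1.trans_le h4)
  have := ha.mono.lt_iff_lt.mp (h3.trans_lt h2)
  omega

lemma IsGrid.idx_lt (ha : IsGrid a) {j k : ℤ} {x : ℝ} (h2 : x < a j)
    (h3 : a k ≤ x) : k < j := ha.mono.lt_iff_lt.mp (h3.trans_lt h2)

lemma IsGrid.idx_le (ha : IsGrid a) {i k : ℤ} {x : ℝ} (h1 : a i < x)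
    (h4 : x ≤ a (k + 1)) : i ≤ k := by
  have := ha.mono.lt_iff_lt.mp (h1.trans_le h4)
  omega

lemma IsGrid.exists_cell (ha : IsGrid a) {b t : ℤ} {x : ℝ} (hbt : b < t) (h1 : a b ≤ x)
    (h2 : x ≤ a t) : ∃ j, b ≤ j ∧ j < t ∧ a j ≤ x ∧ x ≤ a (j + 1) := by
  obtain ⟨i, hi, hi'⟩ := ha.cover x
  rcases h2.lt_or_eq with h2 | h2
  · refine ⟨i, ?_, ha.idx_lt h2 hi, hi, hi'.le⟩
    have := ha.mono.lt_iff_lt.mp (h1.trans_lt hi')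
    omega
  · refine ⟨t - 1, by omega, by omega, ?_, ?_⟩
    · rw [h2]; exact ha.mono.monotone (by omega)
    · rw [h2]; exact ha.mono.monotone (by omega)

lemma R_col (ha : IsGrid a) (i b t : ℤ) (hbt : b < t) :
    R a (col i b t) = Icc (a i) (a (i + 1)) ×ˢ Icc (a b) (a t) := by
  ext ⟨x, y⟩
  constructor
  · rintro ⟨k, l, ⟨h1, h2, h3⟩, hx, hy⟩
    simp only at h1 h2 h3
    subst h1
    exact ⟨hx, (ha.mono.monotone h2).trans hy.1, hy.2.trans (ha.mono.monotone (by omega))⟩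
  · rintro ⟨hx, hy⟩
    obtain ⟨j, h1, h2, h3, h4⟩ := ha.exists_cell hbt hy.1 hy.2
    exact ⟨i, j, ⟨rfl, h1, h2⟩, hx, h3, h4⟩

lemma isClosed_R (ha : IsGrid a) (X : Set (ℤ × ℤ)) : IsClosed (R a X) := by
  have e : R a X = ⋃ p : X, Icc (a p.1.1) (a (p.1.1 + 1)) ×ˢ Icc (a p.1.2) (a (p.1.2 + 1)) := by
    ext ⟨x, y⟩
    simp only [mem_iUnion]
    constructor
    · rintro ⟨i, j, h, hx, hy⟩
      exact ⟨⟨(i, j), h⟩, hx, hy⟩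
    · rintro ⟨⟨⟨i, j⟩, h⟩, hx, hy⟩
      exact ⟨i, j, h, hx, hy⟩
  rw [e]
  apply LocallyFinite.isClosed_iUnion
  · rintro ⟨x, y⟩
    obtain ⟨i, hi, hi'⟩ := ha.cover x
    obtain ⟨j, hj, hj'⟩ := ha.cover y
    have hi0 : a (i - 1) < a i := ha.mono (by omega)
    have hj0 : a (j - 1) < a j := ha.mono (by omega)
    refine ⟨Ioo (a (i - 1)) (a (i + 1)) ×ˢ Ioo (a (j - 1)) (a (j + 1)),
      prod_mem_nhds (Ioo_mem_nhds (by linarith) hi') (Ioo_mem_nhds (by linarith) hj'), ?_⟩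
    refine Set.Finite.subset (((Set.finite_Icc (i - 1) i).prod
      (Set.finite_Icc (j - 1) j)).preimage Subtype.val_injective.injOn) ?_
    rintro ⟨⟨k, l⟩, hp⟩ ⟨⟨u, v⟩, ⟨hu, hv⟩, ⟨hu', hv'⟩⟩
    simp only at hu hv hu' hv'
    have := ha.idx hu'.1 hu'.2 hu.1 hu.2
    have := ha.idx hv'.1 hv'.2 hv.1 hv.2
    simp only [mem_preimage, mem_prod, mem_Icc]
    omega
  · intro p
    exact isClosed_Icc.prod isClosed_Icc

lemma mem_R_open (ha : IsGrid a) {X : Set (ℤ × ℤ)} {i j : ℤ} {z : E2}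
    (hz : z ∈ Ioo (a i) (a (i + 1)) ×ˢ Ioo (a j) (a (j + 1))) : z ∈ R a X ↔ (i, j) ∈ X := by
  constructor
  · rintro ⟨k, l, h, hx, hy⟩
    have := ha.idx hz.1.1 hz.1.2 hx.1 hx.2
    have := ha.idx hz.2.1 hz.2.2 hy.1 hy.2
    obtain rfl : k = i := by omega
    obtain rfl : l = j := by omega
    exact h
  · intro h
    exact ⟨i, j, h, ⟨hz.1.1.le, hz.1.2.le⟩, hz.2.1.le, hz.2.2.le⟩

lemma closure_open_cell (ha : IsGrid a) (i j : ℤ) :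
    closure (Ioo (a i) (a (i + 1)) ×ˢ Ioo (a j) (a (j + 1))) =
    Icc (a i) (a (i + 1)) ×ˢ Icc (a j) (a (j + 1)) := by
  rw [closure_prod_eq, closure_Ioo, closure_Ioo]
  · exact (ha.mono (by omega)).ne
  · exact (ha.mono (by omega)).ne

lemma closure_compl_R (ha : IsGrid a) (X : Set (ℤ × ℤ)) : closure (R a X)ᶜ = R a Xᶜ := by
  apply subset_antisymm
  · refine closure_minimal ?_ (isClosed_R ha _)
    rintro ⟨x, y⟩ hz
    obtain ⟨i, hi, hi'⟩ := ha.cover x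
    obtain ⟨j, hj, hj'⟩ := ha.cover y
    refine ⟨i, j, fun h => hz ⟨i, j, h, ⟨hi, hi'.le⟩, hj, hj'.le⟩, ⟨hi, hi'.le⟩, hj, hj'.le⟩
  · rintro z ⟨i, j, h, hx, hy⟩
    have : z ∈ closure (Ioo (a i) (a (i + 1)) ×ˢ Ioo (a j) (a (j + 1))) := by
      rw [closure_open_cell ha]; exact ⟨hx, hy⟩
    refine closure_mono ?_ this
    intro w hw h'
    exact h ((mem_R_open ha hw).mp h')

lemma image_R_compl (ha : IsGrid a) (Φ : E2 ≃ₜ E2) {X Y : Set (ℤ × ℤ)}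
    (h : Φ '' R a X = R a Y) : Φ '' R a Xᶜ = R a Yᶜ := by
  rw [← closure_compl_R ha, ← closure_compl_R ha, Homeomorph.image_closure,
    image_compl_eq Φ.bijective, h]

def Regular (X : Set (ℤ × ℤ)) : Prop := ∀ k l : ℤ,
  ¬ ((k, l) ∈ X ∧ (k + 1, l + 1) ∈ X ∧ (k + 1, l) ∉ X ∧ (k, l + 1) ∉ X) ∧
  ¬ ((k + 1, l) ∈ X ∧ (k, l + 1) ∈ X ∧ (k, l) ∉ X ∧ (k + 1, l + 1) ∉ X)

lemma Regular.compl {X : Set (ℤ × ℤ)} (h : Regular X) : Regular Xᶜ := by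
  intro k l
  have := h k l
  simp only [mem_compl_iff, not_not]
  tauto

structure Run (X : Set (ℤ × ℤ)) (i b t : ℤ) : Prop where
  lt : b < t
  mem : ∀ j, b ≤ j → j < t → (i, j) ∈ X
  bot : (i, b - 1) ∉ X
  top : (i, t) ∉ X

lemma Run.sub {X : Set (ℤ × ℤ)} {i b t : ℤ} (h : Run X i b t) : col i b t ⊆ X := by
  rintro ⟨k, l⟩ ⟨h1, h2, h3⟩
  simp only at h1 h2 h3
  subst h1
  exact h.mem _ h2 h3

lemma Run.regular {X : Set (ℤ × ℤ)} {i b t : ℤ} (h : Run X i b t) (hX : Regular X) :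
    Regular (X \ col i b t) := by
  have up : ∀ k l, (k, l) ∈ col i b t → (k, l + 1) ∈ X → (k, l + 1) ∈ col i b t := by
    rintro k l ⟨h1, h2, h3⟩ h4
    simp only at h1 h2 h3
    subst h1
    refine ⟨rfl, by simp only; omega, ?_⟩
    by_contra h5
    obtain rfl : l + 1 = t := by simp only at h5; omega
    exact h.top h4
  have dn : ∀ k l, (k, l + 1) ∈ col i b t → (k, l) ∈ X → (k, l) ∈ col i b t := by
    rintro k l ⟨h1, h2, h3⟩ h4
    simp only at h1 h2 h3
    subst h1
    refine ⟨rfl, ?_, by simp only; omega⟩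
    by_contra h5
    obtain rfl : l = b - 1 := by simp only at h5; omega
    exact h.bot h4
  intro k l
  have := hX k l
  have := up k l
  have := up (k + 1) l
  have := dn k l
  have := dn (k + 1) l
  simp only [Set.mem_sdiff]
  grind

/-- peeling lemmas -/
lemma peelE (ha : IsGrid a) {X : Set (ℤ × ℤ)} {i b t : ℤ} (hbt : b < t)
    (h1 : ∀ k l, i - 1 ≤ k → k ≤ i → b - 1 ≤ l → l ≤ t → (k, l) ∉ X)
    (h2 : ∀ l, b ≤ l → l < t → (i + 1, l) ∈ X) :
    ∃ Φ : E2 ≃ₜ E2, Good Φ ∧ Φ '' R a (X ∪ col i b t) = R a X := by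
  have g1 : a (i - 1) < a i := ha.mono (by omega)
  have g2 : a (i + 1) < a (i + 1 + 1) := ha.mono (by omega)
  have g3 : a (b - 1) < a b := ha.mono (by omega)
  have g4 : a t < a (t + 1) := ha.mono (by omega)
  have g0 : a i < a (i + 1) := ha.mono (by omega)
  have g5 : a b < a t := ha.mono (by omega)
  obtain ⟨δ, d0, d1, d2, d3, d4⟩ : ∃ δ > 0, δ < a i - a (i - 1) ∧ δ < a (i + 1 + 1) - a (i + 1) ∧
      δ < a b - a (b - 1) ∧ δ < a (t + 1) - a t := by
    have : 0 < min (min (a i - a (i - 1)) (a (i + 1 + 1) - a (i + 1)))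
        (min (a b - a (b - 1)) (a (t + 1) - a t)) := by
      simp only [lt_min_iff]; refine ⟨⟨?_, ?_⟩, ?_, ?_⟩ <;> linarith
    obtain ⟨δ, h, h'⟩ := exists_between this
    simp only [lt_min_iff] at h'
    exact ⟨δ, h, h'.1.1, h'.1.2, h'.2.1, h'.2.2⟩
  obtain ⟨Φ, p1, p2, p3⟩ := attachE (a i) (a (i + 1)) (a b) (a t) δ g0 g5 d0
  refine ⟨Φ, p1, ?_⟩
  rw [R_union, R_col ha _ _ _ hbt]
  apply p3
  · rintro x y e1 e2 e3 e4 ⟨k, l, hkl, hx, hy⟩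
    have := ha.idx (by linarith : a (i - 1) < x) e2 hx.1 hx.2
    have := ha.idx (by linarith : a (b - 1) < y) (by linarith : y < a (t + 1)) hy.1 hy.2
    exact h1 k l (by omega) (by omega) (by omega) (by omega) hkl
  · intro x y e1 e2 e3 e4
    obtain ⟨l, f1, f2, f3⟩ := ha.exists_cell hbt e3 e4
    exact ⟨i + 1, l, h2 l f1 f2, ⟨e1, by simp only; linarith⟩, f3⟩

lemma peelS (ha : IsGrid a) {X : Set (ℤ × ℤ)} {i b t : ℤ} (hbt : b < t)
    (h1 : ∀ k l, i - 1 ≤ k → k ≤ i + 1 → b ≤ l → l ≤ t → (k, l) ∉ X)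
    (h2 : (i, b - 1) ∈ X) :
    ∃ Φ : E2 ≃ₜ E2, Good Φ ∧ Φ '' R a (X ∪ col i b t) = R a X := by
  have g1 : a (i - 1) < a i := ha.mono (by omega)
  have g2 : a (i + 1) < a (i + 2) := ha.mono (by omega)
  have g3 : a (b - 1) < a b := ha.mono (by omega)
  have g4 : a t < a (t + 1) := ha.mono (by omega)
  have g0 : a i < a (i + 1) := ha.mono (by omega)
  have g5 : a b < a t := ha.mono (by omega)
  obtain ⟨δ, d0, d1, d2, d3, d4⟩ : ∃ δ > 0, δ < a i - a (i - 1) ∧ δ < a (i + 2) - a (i + 1) ∧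
      δ < a b - a (b - 1) ∧ δ < a (t + 1) - a t := by
    have : 0 < min (min (a i - a (i - 1)) (a (i + 2) - a (i + 1)))
        (min (a b - a (b - 1)) (a (t + 1) - a t)) := by
      simp only [lt_min_iff]; refine ⟨⟨?_, ?_⟩, ?_, ?_⟩ <;> linarith
    obtain ⟨δ, h, h'⟩ := exists_between this
    simp only [lt_min_iff] at h'
    exact ⟨δ, h, h'.1.1, h'.1.2, h'.2.1, h'.2.2⟩
  obtain ⟨Φ, p1, p2, p3⟩ := attachS (a i) (a (i + 1)) (a b) (a t) δ g0 g5 d0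
  refine ⟨Φ, p1, ?_⟩
  rw [R_union, R_col ha _ _ _ hbt]
  apply p3
  · rintro x y e1 e2 e3 e4 ⟨k, l, hkl, hx, hy⟩
    have := ha.idx (by linarith : a (i - 1) < x) (by linarith : x < a (i + 2)) hx.1 hx.2
    have := ha.idx e3 (by linarith : y < a (t + 1)) hy.1 hy.2
    exact h1 k l (by omega) (by omega) (by omega) (by omega) hkl
  · intro x y e1 e2 e3 e4
    refine ⟨i, b - 1, h2, ⟨e1, e2⟩, by simp only; linarith, ?_⟩
    rw [sub_add_cancel]; exact e4

lemma peelN (ha : IsGrid a) {X : Set (ℤ × ℤ)} {i b t : ℤ} (hbt : b < t)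
    (h1 : ∀ k l, i - 1 ≤ k → k ≤ i + 1 → b - 1 ≤ l → l < t → (k, l) ∉ X)
    (h2 : (i, t) ∈ X) :
    ∃ Φ : E2 ≃ₜ E2, Good Φ ∧ Φ '' R a (X ∪ col i b t) = R a X := by
  have g1 : a (i - 1) < a i := ha.mono (by omega)
  have g2 : a (i + 1) < a (i + 2) := ha.mono (by omega)
  have g3 : a (b - 1) < a b := ha.mono (by omega)
  have g4 : a t < a (t + 1) := ha.mono (by omega)
  have g0 : a i < a (i + 1) := ha.mono (by omega)
  have g5 : a b < a t := ha.mono (by omega)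
  obtain ⟨δ, d0, d1, d2, d3, d4⟩ : ∃ δ > 0, δ < a i - a (i - 1) ∧ δ < a (i + 2) - a (i + 1) ∧
      δ < a b - a (b - 1) ∧ δ < a (t + 1) - a t := by
    have : 0 < min (min (a i - a (i - 1)) (a (i + 2) - a (i + 1)))
        (min (a b - a (b - 1)) (a (t + 1) - a t)) := by
      simp only [lt_min_iff]; refine ⟨⟨?_, ?_⟩, ?_, ?_⟩ <;> linarith
    obtain ⟨δ, h, h'⟩ := exists_between this
    simp only [lt_min_iff] at h'
    exact ⟨δ, h, h'.1.1, h'.1.2, h'.2.1, h'.2.2⟩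
  obtain ⟨Φ, p1, p2, p3⟩ := attachN (a i) (a (i + 1)) (a b) (a t) δ g0 g5 d0
  refine ⟨Φ, p1, ?_⟩
  rw [R_union, R_col ha _ _ _ hbt]
  apply p3
  · rintro x y e1 e2 e3 e4 ⟨k, l, hkl, hx, hy⟩
    have := ha.idx (by linarith : a (i - 1) < x) (by linarith : x < a (i + 2)) hx.1 hx.2
    have := ha.idx (by linarith : a (b - 1) < y) e4 hy.1 hy.2
    exact h1 k l (by omega) (by omega) (by omega) (by omega) hkl
  · intro x y e1 e2 e3 e4
    exact ⟨i, t, h2, ⟨e1, e2⟩, e3, by simp only; linarith⟩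

/-- corner information at a run with white left side -/
lemma Run.corners {X : Set (ℤ × ℤ)} {i b t : ℤ} (h : Run X i b t) (hX : Regular X)
    (hl : ∀ j, b ≤ j → j < t → (i - 1, j) ∉ X) :
    ∀ j, b - 1 ≤ j → j ≤ t → (i - 1, j) ∉ X := by
  intro j h1 h2 h3
  have hlt := h.lt
  rcases lt_or_ge j b with h4 | h4
  · obtain rfl : j = b - 1 := by omega
    have := (hX (i - 1) (b - 1)).1
    simp only [sub_add_cancel] at this
    exact this ⟨h3, h.mem _ le_rfl hlt, h.bot, hl _ le_rfl hlt⟩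
  · rcases lt_or_ge j t with h5 | h5
    · exact hl j h4 h5 h3
    · obtain rfl : j = t := by omega
      have := (hX (i - 1) (j - 1)).2
      simp only [sub_add_cancel] at this
      exact this ⟨h.mem _ (by omega) (by omega), h3, hl _ (by omega) (by omega), h.top⟩

lemma Run.corner_top {X : Set (ℤ × ℤ)} {i b t : ℤ} (h : Run X i b t) (hX : Regular X)
    (hl : (i + 1, t - 1) ∉ X) : (i + 1, t) ∉ X := by
  intro h3
  have hlt := h.lt
  have := (hX i (t - 1)).1
  simp only [sub_add_cancel] at this
  exact this ⟨h.mem _ (by omega) (by omega), h3, hl, h.top⟩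

lemma Run.corner_bot {X : Set (ℤ × ℤ)} {i b t : ℤ} (h : Run X i b t) (hX : Regular X)
    (hl : (i + 1, b) ∉ X) : (i + 1, b - 1) ∉ X := by
  intro h3
  have hlt := h.lt
  have := (hX i (b - 1)).2
  simp only [sub_add_cancel] at this
  exact this ⟨h3, h.mem _ (by omega) (by omega), h.bot, hl⟩

lemma trans_image (Φ Ψ : E2 ≃ₜ E2) (A : Set E2) : (Φ.trans Ψ) '' A = Ψ '' (Φ '' A) := by
  rw [image_image]; rfl

lemma flip (ha : IsGrid a) {X : Set (ℤ × ℤ)} {i b t c d : ℤ} (h : Run X i b t) (hX : Regular X)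
    (hl : ∀ j, b ≤ j → j < t → (i - 1, j) ∉ X) (hbc : b ≤ c) (hcd : c < d) (hdt : d ≤ t)
    (hE : ∀ j, b ≤ j → j < t → ((i + 1, j) ∈ X ↔ c ≤ j ∧ j < d)) :
    ∃ Φ : E2 ≃ₜ E2, Good Φ ∧ Φ '' R a X = R a (X \ col i b t) := by
  have hL := h.corners hX hl
  set X0 := X \ col i b t with hX0
  have e3 : X = ((X0 ∪ col i c d) ∪ col i b c) ∪ col i d t := by
    ext ⟨k, l⟩
    simp only [hX0, mem_union, Set.mem_sdiff, mem_col]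
    by_cases hk : (k, l) ∈ X
    · simp only [hk, true_and, true_iff]; omega
    · simp only [hk, false_and, false_iff, false_or]
      have : ¬ (k = i ∧ b ≤ l ∧ l < t) := by
        rintro ⟨rfl, h1, h2⟩; exact hk (h.mem _ h1 h2)
      omega
  have m0 : ∀ k l, (k, l) ∈ X0 → (k, l) ∈ X ∧ ¬ (k = i ∧ b - 1 ≤ l ∧ l ≤ t) := by
    intro k l hkl
    refine ⟨hkl.1, ?_⟩
    rintro ⟨rfl, h1, h2⟩
    rcases lt_or_ge l b with h4 | h4
    · obtain rfl : l = b - 1 := by omega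
      exact h.bot hkl.1
    · rcases lt_or_ge l t with h5 | h5
      · exact hkl.2 ⟨rfl, h4, h5⟩
      · obtain rfl : l = t := by omega
        exact h.top hkl.1
  -- top
  obtain ⟨Φ1, g1, f1⟩ : ∃ Φ : E2 ≃ₜ E2, Good Φ ∧
      Φ '' R a X = R a ((X0 ∪ col i c d) ∪ col i b c) := by
    rcases hdt.lt_or_eq with hdt | hdt
    · rw [e3]
      apply peelS ha hdt
      · intro k l k1 k2 l1 l2 hm
        have hne : k ≠ i := by
          rintro rfl
          rcases hm with (hm | hm) | hm
          · exact (m0 _ _ hm).2 ⟨rfl, by omega, by omega⟩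
          · have := mem_col.mp hm; omega
          · have := mem_col.mp hm; omega
        have hm' : (k, l) ∈ X := by
          rcases hm with (hm | hm) | hm
          · exact hm.1
          · exact absurd (mem_col.mp hm).1 hne
          · exact absurd (mem_col.mp hm).1 hne
        rcases (by omega : k = i - 1 ∨ k = i + 1) with rfl | rfl
        · exact hL l (by omega) (by omega) hm'
        · rcases l2.lt_or_eq with l2 | rfl
          · have := (hE l (by omega) l2).mp hm'; omega
          · refine h.corner_top hX ?_ hm'
            rw [hE _ (by omega) (by omega)]; omega
      · left; right; exact ⟨rfl, by simp only; omega, by simp only; omega⟩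
    · refine ⟨Homeomorph.refl _, Good.refl, ?_⟩
      have : col i d t = ∅ := by
        ext ⟨k, l⟩; simp only [mem_col, mem_empty_iff_false, iff_false]; omega
      rw [this, union_empty] at e3
      rw [← e3]; simp
  obtain ⟨Φ2, g2, f2⟩ : ∃ Φ : E2 ≃ₜ E2, Good Φ ∧
      Φ '' R a ((X0 ∪ col i c d) ∪ col i b c) = R a (X0 ∪ col i c d) := by
    rcases hbc.lt_or_eq with hbc | hbc
    · apply peelN ha hbc
      · intro k l k1 k2 l1 l2 hm
        have hne : k ≠ i := by
          rintro rfl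
          rcases hm with hm | hm
          · exact (m0 _ _ hm).2 ⟨rfl, by omega, by omega⟩
          · have := mem_col.mp hm; omega
        have hm' : (k, l) ∈ X := by
          rcases hm with hm | hm
          · exact hm.1
          · exact absurd (mem_col.mp hm).1 hne
        rcases (by omega : k = i - 1 ∨ k = i + 1) with rfl | rfl
        · exact hL l (by omega) (by omega) hm'
        · rcases l1.lt_or_eq with l1 | rfl
          · have := (hE l (by omega) (by omega)).mp hm'; omega
          · refine h.corner_bot hX ?_ hm'
            rw [hE _ (by omega) (by omega)]; omega
      · right; exact ⟨rfl, by simp only; omega, by simp only; omega⟩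
    · refine ⟨Homeomorph.refl _, Good.refl, ?_⟩
      have : col i b c = ∅ := by
        ext ⟨k, l⟩; simp only [mem_col, mem_empty_iff_false, iff_false]; omega
      rw [this, union_empty]; simp
  obtain ⟨Φ3, g3, f3⟩ : ∃ Φ : E2 ≃ₜ E2, Good Φ ∧ Φ '' R a (X0 ∪ col i c d) = R a X0 := by
    apply peelE ha hcd
    · intro k l k1 k2 l1 l2 hm
      rcases (by omega : k = i - 1 ∨ k = i) with rfl | rfl
      · exact hL l (by omega) (by omega) hm.1
      · exact (m0 _ _ hm).2 ⟨rfl, by omega, by omega⟩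
    · intro l l1 l2
      exact ⟨(hE l (by omega) (by omega)).mpr ⟨l1, l2⟩, fun hh => by
        have := mem_col.mp hh; omega⟩
  refine ⟨Φ1.trans (Φ2.trans Φ3), g1.trans (g2.trans g3), ?_⟩
  rw [trans_image, trans_image, f1, f2, f3]

/-- find a run with order-connected right-hand contact -/
lemma find_run {S : Set (ℤ × ℤ)} {M : ℤ} (hM : ∀ i j, (i, j) ∈ S → i < M) (n : ℕ) :
    ∀ (X : Set (ℤ × ℤ)) (i b t : ℤ), (X = S ∨ X = Sᶜ) → Run X i b t →
    (∀ j, b ≤ j → j < t → (i - 1, j) ∉ X) → M - i ≤ n →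
    ∃ (Y : Set (ℤ × ℤ)) (i b t : ℤ), (Y = S ∨ Y = Sᶜ) ∧ Run Y i b t ∧
    (∀ j, b ≤ j → j < t → (i - 1, j) ∉ Y) ∧ ∃ c d, b ≤ c ∧ c ≤ d ∧ d ≤ t ∧
      ∀ j, b ≤ j → j < t → ((i + 1, j) ∈ Y ↔ c ≤ j ∧ j < d) := by
  induction n with
  | zero =>
    intro X i b t hX hr hl hn
    refine ⟨X, i, b, t, hX, hr, hl, ?_⟩
    have hi : ∀ j, (i + 1, j) ∉ S := fun j hj => by
      have := hM _ _ hj; simp at hn; omega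
    have := hr.lt
    rcases hX with rfl | rfl
    · exact ⟨b, b, le_rfl, le_rfl, this.le, fun j h1 h2 => by
        simp only [hi, false_iff]; omega⟩
    · exact ⟨b, t, le_rfl, this.le, le_rfl, fun j h1 h2 => by
        simp only [mem_compl_iff, hi, not_false_iff, true_iff]; omega⟩
  | succ n ih =>
    intro X i b t hX hr hl hn
    by_cases hoc : ∀ j1 j2 j3, b ≤ j1 → j1 < j2 → j2 < j3 → j3 < t → (i + 1, j1) ∈ X →
        (i + 1, j3) ∈ X → (i + 1, j2) ∈ X
    · refine ⟨X, i, b, t, hX, hr, hl, ?_⟩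
      have := hr.lt
      by_cases hne : ∃ j, b ≤ j ∧ j < t ∧ (i + 1, j) ∈ X
      · obtain ⟨j0, q1, q2, q3⟩ := hne
        obtain ⟨c, ⟨c1, c2, c3⟩, c4⟩ := Int.exists_least_of_bdd
          (P := fun j => b ≤ j ∧ j < t ∧ (i + 1, j) ∈ X) ⟨b, fun z hz => hz.1⟩ ⟨j0, q1, q2, q3⟩
        obtain ⟨d, ⟨d1, d2, d3⟩, d4⟩ := Int.exists_greatest_of_bdd
          (P := fun j => b ≤ j ∧ j < t ∧ (i + 1, j) ∈ X) ⟨t, fun z hz => hz.2.1.le⟩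
          ⟨j0, q1, q2, q3⟩
        have hcd := c4 d ⟨d1, d2, d3⟩
        refine ⟨c, d + 1, c1, by omega, by omega, ?_⟩
        intro j h1 h2
        constructor
        · intro h3
          have := c4 j ⟨h1, h2, h3⟩
          have := d4 j ⟨h1, h2, h3⟩
          omega
        · rintro ⟨h3, h4⟩
          rcases h3.lt_or_eq with h3 | rfl
          · rcases (by omega : j = d ∨ j < d) with rfl | h5
            · exact d3
            · exact hoc c j d c1 h3 h5 d2 c3 d3
          · exact c3
      · refine ⟨b, b, le_rfl, le_rfl, this.le, fun j h1 h2 => ?_⟩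
        constructor
        · intro h3; exact absurd ⟨j, h1, h2, h3⟩ hne
        · omega
    · push Not at hoc
      obtain ⟨j1, j2, j3, h1, h2, h3, h4, h5, h6, h7⟩ := hoc
      have hb : i + 1 < M := by
        rcases hX with rfl | rfl
        · exact hM _ _ h5
        · exact hM _ _ (not_not.mp h7)
      obtain ⟨u, ⟨u1, u2⟩, u3⟩ := Int.exists_greatest_of_bdd
          (P := fun j => j < j2 ∧ (i + 1, j) ∈ X) ⟨j2, fun z hz => hz.1.le⟩ ⟨j1, h2, h5⟩
      obtain ⟨v, ⟨v1, v2⟩, v3⟩ := Int.exists_least_of_bdd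
          (P := fun j => j2 < j ∧ (i + 1, j) ∈ X) ⟨j2, fun z hz => hz.1.le⟩ ⟨j3, h3, h6⟩
      have w1 := u3 j1 ⟨h2, h5⟩
      have w2 := v3 j3 ⟨h3, h6⟩
      refine ih Xᶜ (i + 1) (u + 1) v ?_ ⟨by omega, ?_, ?_, ?_⟩ ?_ (by push_cast at hn; omega)
      · rcases hX with rfl | rfl
        · right; rfl
        · left; simp
      · intro j g1 g2 g3
        rcases lt_trichotomy j j2 with g | rfl | g
        · have := u3 j ⟨g, g3⟩; omega
        · exact h7 g3
        · have := v3 j ⟨g, g3⟩; omega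
      · simpa using u2
      · simpa using v2
      · intro j g1 g2
        simp only [add_sub_cancel_right, mem_compl_iff, not_not]
        exact hr.mem j (by omega) (by omega)

end
end DH

namespace DH
open Filter Topology

/-- affine homeomorphism -/
def aff (L : E2 ≃L[ℝ] E2) (c : E2) : E2 ≃ₜ E2 := L.toHomeomorph.trans (Homeomorph.addLeft c)

lemma aff_apply (L : E2 ≃L[ℝ] E2) (c u : E2) : aff L c u = c + L u := rfl

/-- square with parallelogram holes -/
def Model (D : Set E2) : Prop := ∃ (ι : Type) (_ : Finite ι) (L : ι → E2 ≃L[ℝ] E2) (c : ι → E2),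
  (∀ i, aff (L i) (c i) '' closedBall 0 1 ⊆ ball 0 1) ∧
  (Pairwise fun i j => Disjoint (aff (L i) (c i) '' closedBall 0 1)
    (aff (L j) (c j) '' closedBall 0 1)) ∧
  D = closedBall 0 1 \ ⋃ i, aff (L i) (c i) '' ball 0 1

lemma affine_inj {Φ : E2 ≃ₜ E2} {p v : E2} {L : E2 →L[ℝ] E2}
    (h : ∀ᶠ y in 𝓝 p, Φ y = L y + v) : Function.Injective L := by
  rw [injective_iff_map_eq_zero]
  intro w hw
  have hc : Tendsto (fun t : ℝ => p + t • w) (𝓝 0) (𝓝 p) := by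
    have : Continuous (fun t : ℝ => p + t • w) := by fun_prop
    simpa using this.tendsto 0
  have h2 : ∀ᶠ t in 𝓝[≠] (0:ℝ), Φ (p + t • w) = L (p + t • w) + v :=
    (hc.eventually h).filter_mono nhdsWithin_le_nhds
  obtain ⟨t, ht, ht0⟩ := (h2.and self_mem_nhdsWithin).exists
  rw [map_add L, map_smul L, hw, smul_zero, add_zero, ← h.self_of_nhds] at ht
  have := Φ.injective ht
  have h3 : t • w = 0 := by simpa using this
  exact (smul_eq_zero.mp h3).resolve_left ht0

lemma image_of_id_off {Θ : E2 ≃ₜ E2} {A : Set E2} (h : ∀ z, z ∉ A → Θ z = z) : Θ '' A = A := by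
  have h1 : Θ '' Aᶜ = Aᶜ := by
    ext z
    constructor
    · rintro ⟨y, hy, rfl⟩; rwa [h y hy]
    · intro hz; exact ⟨z, hz, h z hz⟩
  rw [image_compl_eq Θ.bijective] at h1
  exact compl_injective h1

lemma ball_prod_eq (p : E2) (δ : ℝ) : closedBall p δ =
    Icc (p.1 - δ) (p.1 + δ) ×ˢ Icc (p.2 - δ) (p.2 + δ) := by
  rw [← Real.closedBall_eq_Icc, ← Real.closedBall_eq_Icc, closedBall_prod_same]

lemma model_addhole {Φ : E2 ≃ₜ E2} (hΦ : Good Φ) {A : Set E2} (hM : Model (Φ '' A))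
    {x0 x1 y0 y1 δ : ℝ} (hx : x0 < x1) (hy : y0 < y1) (hδ : 0 < δ)
    (hA : ∀ x y : ℝ, x0 - δ ≤ x → x ≤ x1 + δ → y0 - δ ≤ y → y ≤ y1 + δ → (x, y) ∈ A) :
    ∃ Ψ : E2 ≃ₜ E2, Good Ψ ∧ Model (Ψ '' (A \ Ioo x0 x1 ×ˢ Ioo y0 y1)) := by
  have hne : (Ioo x0 x1 ×ˢ Ioo y0 y1 : Set E2).Nonempty :=
    (nonempty_Ioo.mpr hx).prod (nonempty_Ioo.mpr hy)
  have hop : IsOpen (Ioo x0 x1 ×ˢ Ioo y0 y1 : Set E2) := isOpen_Ioo.prod isOpen_Ioo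
  obtain ⟨p, hp, L, v, hL⟩ := Dense.inter_open_nonempty hΦ _ hop hne
  have hinj := affine_inj hL
  obtain ⟨r, hr, hr'⟩ := Metric.nhds_basis_closedBall.mem_iff.mp
    (inter_mem (hop.mem_nhds hp) hL)
  have hb : closedBall p r ⊆ Ioo x0 x1 ×ˢ Ioo y0 y1 := fun z hz => (hr' hz).1
  have hb2 : ∀ z ∈ closedBall p r, Φ z = L z + v := fun z hz => (hr' hz).2
  have q1 : ((p.1 - r, p.2 - r) : E2) ∈ closedBall p r := by
    rw [ball_prod_eq]; refine ⟨⟨?_, ?_⟩, ?_, ?_⟩ <;> simp only <;> linarith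
  have q2 : ((p.1 + r, p.2 + r) : E2) ∈ closedBall p r := by
    rw [ball_prod_eq]; refine ⟨⟨?_, ?_⟩, ?_, ?_⟩ <;> simp only <;> linarith
  have q1 := hb q1
  have q2 := hb q2
  obtain ⟨Θ, t1, t2, t3⟩ := shrink_rect x0 x1 y0 y1 (p.1 - r) (p.1 + r) (p.2 - r) (p.2 + r) δ
    q1.1.1 (by linarith) q2.1.2 q1.2.1 (by linarith) q2.2.2 hδ
  rw [← ball_prod_eq] at t3
  have t4 : Θ '' A = A := by
    apply image_of_id_off
    rintro ⟨x, y⟩ hz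
    apply t2
    rintro ⟨h1, h2, h3, h4⟩
    exact hz (hA x y h1 h2 h3 h4)
  have t5 : Θ '' (Ioo x0 x1 ×ˢ Ioo y0 y1) = ball p r := by
    have := congrArg interior t3
    rw [← Homeomorph.image_interior, interior_prod_eq, interior_Icc, interior_Icc,
      interior_closedBall _ hr.ne'] at this
    exact this
  -- the linear part
  let Le : E2 ≃L[ℝ] E2 :=
    (LinearEquiv.ofInjectiveEndo (L : E2 →ₗ[ℝ] E2) hinj).toContinuousLinearEquiv
  have hLe : ∀ z, Le z = L z := fun z => rfl
  let L' : E2 ≃L[ℝ] E2 := ((LinearEquiv.smulOfNeZero ℝ E2 r hr.ne').toContinuousLinearEquiv).trans Le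
  have hL' : ∀ z, L' z = r • L z := by
    intro z
    change L (r • z) = _
    rw [map_smul]
  have im : ∀ s t : Set E2, t ⊆ closedBall p r → (∀ u, u ∈ s ↔ p + r • u ∈ t) →
      aff L' (L p + v) '' s = Φ '' t := by
    intro s t hst hs
    ext w
    constructor
    · rintro ⟨u, hu, rfl⟩
      refine ⟨p + r • u, (hs u).mp hu, ?_⟩
      rw [hb2 _ (hst ((hs u).mp hu)), aff_apply, hL', map_add, map_smul]; abel
    · rintro ⟨z, hz, rfl⟩
      have e : p + r • (r⁻¹ • (z - p)) = z := by
        rw [smul_smul, mul_inv_cancel₀ hr.ne', one_smul]; abel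
      refine ⟨r⁻¹ • (z - p), (hs _).mpr (by rwa [e]), ?_⟩
      rw [hb2 _ (hst hz), aff_apply, hL', ← map_smul, smul_smul, mul_inv_cancel₀ hr.ne', one_smul,
        map_sub]; abel
  have i1 : aff L' (L p + v) '' closedBall 0 1 = Φ '' closedBall p r := by
    apply im _ _ subset_rfl
    intro u
    rw [mem_closedBall_zero_iff, mem_closedBall_iff_norm, add_sub_cancel_left, norm_smul,
      Real.norm_of_nonneg hr.le]
    constructor
    · intro h; nlinarith
    · intro h; nlinarith
  have i2 : aff L' (L p + v) '' ball 0 1 = Φ '' ball p r := by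
    apply im _ _ ball_subset_closedBall
    intro u
    rw [mem_ball_zero_iff, mem_ball_iff_norm, add_sub_cancel_left, norm_smul,
      Real.norm_of_nonneg hr.le]
    constructor
    · intro h; nlinarith
    · intro h; nlinarith
  have hsubint : closedBall p r ⊆ interior A := by
    refine hb.trans (interior_maximal ?_ hop)
    rintro ⟨x, y⟩ ⟨hx, hy⟩
    have := hx.1; have := hx.2; have := hy.1; have := hy.2
    simp only at *
    apply hA <;> linarith
  have i3 : aff L' (L p + v) '' closedBall 0 1 ⊆ interior (Φ '' A) := by
    rw [i1, ← Homeomorph.image_interior]; exact image_mono hsubint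
  refine ⟨Θ.trans Φ, t1.trans hΦ, ?_⟩
  have fin : (Θ.trans Φ) '' (A \ Ioo x0 x1 ×ˢ Ioo y0 y1) =
      (Φ '' A) \ (aff L' (L p + v) '' ball 0 1) := by
    rw [trans_image, image_sdiff Θ.injective, t4, t5, image_sdiff Φ.injective, i2]
  rw [fin]
  obtain ⟨ι, _, Ls, c, h1, h2, h3⟩ := hM
  have hd : ∀ i, Disjoint (aff L' (L p + v) '' closedBall 0 1)
      (aff (Ls i) (c i) '' closedBall 0 1) := by
    intro i
    rw [← closure_ball (0 : E2) one_ne_zero, Homeomorph.image_closure, Homeomorph.image_closure,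
      ← Homeomorph.image_closure, closure_ball (0 : E2) one_ne_zero]
    refine Disjoint.mono_left i3 ?_
    apply Disjoint.closure_right _ isOpen_interior
    refine Disjoint.mono_left interior_subset ?_
    rw [h3]
    exact disjoint_sdiff_left.mono_right (subset_iUnion (fun i => aff (Ls i) (c i) '' ball 0 1) i)
  refine ⟨Option ι, inferInstance, fun o => o.elim L' Ls, fun o => o.elim (L p + v) c, ?_, ?_, ?_⟩
  · rintro (_ | i)
    · refine i3.trans ?_
      rw [h3, ← interior_closedBall (0 : E2) one_ne_zero]
      exact interior_mono sdiff_subset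
    · exact h1 i
  · rintro (_ | i) (_ | j) hij
    · exact absurd rfl hij
    · exact hd j
    · exact (hd i).symm
    · exact h2 (fun h => hij (by rw [h]))
  · rw [h3, iUnion_option, Set.sdiff_sdiff, union_comm]
    rfl

def tops (S : Set (ℤ × ℤ)) : Set (ℤ × ℤ) := {p | p ∈ S ∧ (p.1, p.2 + 1) ∉ S}

lemma tops_remove {S : Set (ℤ × ℤ)} (hS : S.Finite) {i b t : ℤ} (h : Run S i b t) :
    (tops (S \ col i b t)).ncard < (tops S).ncard := by
  have hlt := h.lt
  apply Set.ncard_lt_ncard _ (hS.subset fun p hp => hp.1)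
  rw [Set.ssubset_iff_of_subset]
  · refine ⟨(i, t - 1), ⟨h.mem _ (by omega) (by omega), by simpa using h.top⟩, ?_⟩
    rintro ⟨⟨_, h1⟩, _⟩
    exact h1 ⟨rfl, by simp only; omega, by simp only; omega⟩
  · rintro ⟨k, l⟩ ⟨⟨h1, h2⟩, h3⟩
    refine ⟨h1, fun h4 => h3 ⟨h4, ?_⟩⟩
    rintro ⟨h5, h6, h7⟩
    simp only at h5 h6 h7
    subst h5
    rcases (by omega : l = b - 1 ∨ b ≤ l) with rfl | h8
    · exact h.bot h1
    · exact h2 ⟨rfl, h8, by simp only; omega⟩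

lemma tops_add {S : Set (ℤ × ℤ)} (hS : S.Finite) {i b t : ℤ} (h : Run Sᶜ i b t) :
    (tops (S ∪ col i b t)).ncard < (tops S).ncard := by
  have hlt := h.lt
  have hb := not_not.mp h.bot
  have ht := not_not.mp h.top
  apply Set.ncard_lt_ncard _ (hS.subset fun p hp => hp.1)
  rw [Set.ssubset_iff_of_subset]
  · refine ⟨(i, b - 1), ⟨hb, by simpa using h.mem b le_rfl hlt⟩, ?_⟩
    rintro ⟨_, h1⟩
    exact h1 (Or.inr ⟨rfl, by simp, by simpa using hlt⟩)
  · rintro ⟨k, l⟩ ⟨h1 | ⟨h1, h2, h4⟩, h3⟩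
    · exact ⟨h1, fun h4 => h3 (Or.inl h4)⟩
    · simp only at h1 h2 h3 h4
      subst h1
      exfalso
      rcases (by omega : l + 1 = t ∨ l + 1 < t) with h5 | h5
      · rw [h5] at h3; exact h3 (Or.inl ht)
      · exact h3 (Or.inr ⟨rfl, by simp only; omega, h5⟩)

lemma finite_col (i b t : ℤ) : (col i b t).Finite := by
  refine ((Set.finite_singleton i).prod (Set.finite_Ico b t)).subset ?_
  rintro ⟨k, l⟩ ⟨h1, h2, h3⟩
  exact ⟨h1, h2, h3⟩

section
variable {a : ℤ → ℝ}

lemma ring_out {X : Set (ℤ × ℤ)} {i b t : ℤ} (h : Run X i b t) (hX : Regular X)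
    (hl : ∀ j, b ≤ j → j < t → (i - 1, j) ∉ X) (hr : ∀ j, b ≤ j → j < t → (i + 1, j) ∉ X) :
    ∀ k l, i - 1 ≤ k → k ≤ i + 1 → b - 1 ≤ l → l ≤ t → (k, l) ∈ X → (k, l) ∈ col i b t := by
  intro k l k1 k2 l1 l2 hm
  have hlt := h.lt
  rcases (by omega : k = i - 1 ∨ k = i ∨ k = i + 1) with rfl | rfl | rfl
  · exact absurd hm (h.corners hX hl l l1 l2)
  · rcases (by omega : l = b - 1 ∨ l = t ∨ (b ≤ l ∧ l < t)) with rfl | rfl | hh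
    · exact absurd hm h.bot
    · exact absurd hm h.top
    · exact ⟨rfl, hh.1, hh.2⟩
  · rcases (by omega : l = b - 1 ∨ l = t ∨ (b ≤ l ∧ l < t)) with rfl | rfl | hh
    · exact absurd hm (h.corner_bot hX (hr _ le_rfl hlt))
    · exact absurd hm (h.corner_top hX (hr _ (by omega) (by omega)))
    · exact absurd hm (hr l hh.1 hh.2)

lemma isolated_black (ha : IsGrid a) {S : Set (ℤ × ℤ)} {i b t : ℤ} (h : Run S i b t)
    (hX : Regular S) (hc : IsPreconnected (R a S))
    (hl : ∀ j, b ≤ j → j < t → (i - 1, j) ∉ S) (hr : ∀ j, b ≤ j → j < t → (i + 1, j) ∉ S) :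
    S = col i b t := by
  have hro := ring_out h hX hl hr
  have hsub := h.sub
  have hlt := h.lt
  have hU : R a S = R a (col i b t) ∪ R a (S \ col i b t) := by
    rw [← R_union, union_sdiff_cancel hsub]
  by_contra hne
  obtain ⟨⟨k, l⟩, hk⟩ : (S \ col i b t).Nonempty := by
    rw [nonempty_iff_ne_empty, Ne, Set.sdiff_eq_empty]
    intro hh; exact hne (subset_antisymm hh hsub)
  have cn : ∀ (X : Set (ℤ × ℤ)) k l, (k, l) ∈ X → (a k, a l) ∈ R a X := fun X k l hh =>
    ⟨k, l, hh, ⟨le_rfl, ha.mono.monotone (by omega)⟩, le_rfl, ha.mono.monotone (by omega)⟩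
  obtain ⟨⟨x, y⟩, hz, hz1, hz2⟩ := isPreconnected_closed_iff.mp hc _ _ (isClosed_R ha (col i b t))
    (isClosed_R ha (S \ col i b t)) hU.subset
    ⟨_, cn S i b (h.mem _ le_rfl hlt), cn _ i b ⟨rfl, le_rfl, hlt⟩⟩
    ⟨_, cn S k l hk.1, cn _ k l hk⟩
  rw [R_col ha _ _ _ hlt] at hz1
  obtain ⟨k', l', hm, hx, hy⟩ := hz2
  obtain ⟨hx', hy'⟩ := hz1
  simp only at hx hy hx' hy'
  have e1 := ha.mono.le_iff_le.mp (hx.1.trans hx'.2)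
  have e2 := ha.mono.le_iff_le.mp (hx'.1.trans hx.2)
  have e3 := ha.mono.le_iff_le.mp (hy.1.trans hy'.2)
  have e4 := ha.mono.le_iff_le.mp (hy'.1.trans hy.2)
  exact hm.2 (hro k' l' (by omega) (by omega) (by omega) (by omega) hm.1)

lemma isolated_white (ha : IsGrid a) {S : Set (ℤ × ℤ)} {i b t : ℤ} (h : Run Sᶜ i b t)
    (hX : Regular S)
    (hl : ∀ j, b ≤ j → j < t → (i - 1, j) ∈ S) (hr : ∀ j, b ≤ j → j < t → (i + 1, j) ∈ S) :
    (R a S = R a (S ∪ col i b t) \ Ioo (a i) (a (i + 1)) ×ˢ Ioo (a b) (a t)) ∧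
    (∃ δ > 0, ∀ x y : ℝ, a i - δ ≤ x → x ≤ a (i + 1) + δ → a b - δ ≤ y → y ≤ a t + δ →
      (x, y) ∈ R a (S ∪ col i b t)) ∧
    (a i, a b) ∈ R a S := by
  have hro := ring_out h hX.compl (by simpa using hl) (by simpa using hr)
  have hro' : ∀ k l, i - 1 ≤ k → k ≤ i + 1 → b - 1 ≤ l → l ≤ t → (k, l) ∈ S ∪ col i b t := by
    intro k l h1 h2 h3 h4
    by_cases hm : (k, l) ∈ S
    · exact Or.inl hm
    · exact Or.inr (hro k l h1 h2 h3 h4 hm)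
  have hlt := h.lt
  have g0 : a i < a (i + 1) := ha.mono (by omega)
  refine ⟨?_, ?_, ?_⟩
  · apply subset_antisymm
    · intro z hz
      refine ⟨R_mono a subset_union_left hz, ?_⟩
      rintro ⟨hx, hy⟩
      obtain ⟨k, l, hm, hx', hy'⟩ := hz
      have := ha.idx hx.1 hx.2 hx'.1 hx'.2
      have := ha.idx hy.1 hy.2 hy'.1 hy'.2
      obtain rfl : k = i := by omega
      exact h.mem l (by omega) (by omega) hm
    · rintro ⟨x, y⟩ ⟨hz, hz'⟩
      rw [R_union, R_col ha _ _ _ hlt] at hz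
      rcases hz with hz | ⟨hx, hy⟩
      · exact hz
      · obtain ⟨j, j1, j2, j3, j4⟩ := ha.exists_cell hlt hy.1 hy.2
        simp only at hx hy
        have hcase : x = a i ∨ x = a (i + 1) ∨ y = a b ∨ y = a t := by
          by_contra hcon
          push Not at hcon
          obtain ⟨c1, c2, c3, c4⟩ := hcon
          exact hz' ⟨⟨lt_of_le_of_ne hx.1 c1.symm, lt_of_le_of_ne hx.2 c2⟩,
            lt_of_le_of_ne hy.1 c3.symm, lt_of_le_of_ne hy.2 c4⟩
        rcases hcase with rfl | rfl | rfl | rfl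
        · exact ⟨i - 1, j, hl j j1 j2, ⟨ha.mono.monotone (by omega), by simp⟩, j3, j4⟩
        · exact ⟨i + 1, j, hr j j1 j2, ⟨le_rfl, ha.mono.monotone (by omega)⟩, j3, j4⟩
        · exact ⟨i, b - 1, not_not.mp h.bot, hx, ha.mono.monotone (by omega), by simp⟩
        · exact ⟨i, t, not_not.mp h.top, hx, le_rfl, ha.mono.monotone (by omega)⟩
  · have g1 : a (i - 1) < a i := ha.mono (by omega)
    have g2 : a (i + 1) < a (i + 2) := ha.mono (by omega)
    have g3 : a (b - 1) < a b := ha.mono (by omega)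
    have g4 : a t < a (t + 1) := ha.mono (by omega)
    have : 0 < min (min (a i - a (i - 1)) (a (i + 2) - a (i + 1)))
        (min (a b - a (b - 1)) (a (t + 1) - a t)) := by
      simp only [lt_min_iff]; refine ⟨⟨?_, ?_⟩, ?_, ?_⟩ <;> linarith
    obtain ⟨δ, hδ, h'⟩ := exists_between this
    simp only [lt_min_iff] at h'
    obtain ⟨⟨d1, d2⟩, d3, d4⟩ := h'
    refine ⟨δ, hδ, ?_⟩
    intro x y e1 e2 e3 e4
    obtain ⟨k, k1, k2, k3⟩ := ha.exists_cell (b := i - 1) (t := i + 2) (x := x) (by omega)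
      (by linarith) (by linarith)
    obtain ⟨l, l1, l2, l3⟩ := ha.exists_cell (b := b - 1) (t := t + 1) (x := y) (by omega)
      (by linarith) (by linarith)
    exact ⟨k, l, hro' k l (by omega) (by omega) (by omega) (by omega), k3, l3⟩
  · exact ⟨i - 1, b, hl b le_rfl hlt, ⟨ha.mono.monotone (by omega), by simp⟩, le_rfl,
      ha.mono.monotone (by omega)⟩

lemma rect_model (x0 x1 y0 y1 : ℝ) (hx : x0 < x1) (hy : y0 < y1) :
    ∃ Φ : E2 ≃ₜ E2, Good Φ ∧ Model (Φ '' (Icc x0 x1 ×ˢ Icc y0 y1)) := by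
  have hw : 0 < x1 - x0 := by linarith
  have hh : 0 < y1 - y0 := by linarith
  have hD : ((x1 - x0) / 2) * ((y1 - y0) / 2) - 0 * 0 ≠ 0 := by
    have := mul_pos hw hh
    have : (0:ℝ) < ((x1 - x0) / 2) * ((y1 - y0) / 2) - 0 * 0 := by nlinarith
    exact this.ne'
  set M := affH ((x1 - x0) / 2) 0 0 ((y1 - y0) / 2) ((x0 + x1) / 2) ((y0 + y1) / 2) hD with hMd
  refine ⟨M.symm, affH_symm_good _ _ _ _ _ _ _, Empty, inferInstance, fun e => e.elim,
    fun e => e.elim, fun e => e.elim, fun e => e.elim, ?_⟩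
  have m : ∀ x y : ℝ, M (x, y) = ((x0 + x1) / 2 + x * ((x1 - x0) / 2),
      (y0 + y1) / 2 + y * ((y1 - y0) / 2)) := by
    intro x y; rw [hMd, affH_apply]; ext <;> simp <;> ring
  rw [Homeomorph.image_symm, ball_prod_eq]
  ext ⟨x, y⟩
  simp only [mem_preimage, m, mem_prod, mem_Icc, iUnion_of_empty, sdiff_empty, Prod.fst_zero,
    Prod.snd_zero, zero_sub, zero_add]
  constructor
  · rintro ⟨⟨h1, h2⟩, h3, h4⟩
    refine ⟨⟨?_, ?_⟩, ?_, ?_⟩ <;> nlinarith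
  · rintro ⟨⟨h1, h2⟩, h3, h4⟩
    refine ⟨⟨?_, ?_⟩, ?_, ?_⟩ <;> nlinarith

lemma bdd_of_finite {S : Set (ℤ × ℤ)} (hS : S.Finite) : ∃ N : ℤ, ∀ i j, (i, j) ∈ S →
    -N < i ∧ i < N ∧ -N < j ∧ j < N := by
  induction S, hS using Set.Finite.induction_on with
  | empty => exact ⟨0, fun i j h => h.elim⟩
  | @insert p s _ _ ih =>
    obtain ⟨N, hN⟩ := ih
    refine ⟨(N.natAbs : ℤ) + p.1.natAbs + p.2.natAbs + 1, ?_⟩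
    rintro i j (rfl | h)
    · simp only; omega
    · have := hN i j h; omega

lemma start_run {S : Set (ℤ × ℤ)} (hS : S.Finite) (hne : S.Nonempty) :
    ∃ i b t, Run S i b t ∧ ∀ j, b ≤ j → j < t → (i - 1, j) ∉ S := by
  obtain ⟨N, hN⟩ := bdd_of_finite hS
  obtain ⟨⟨i0, j0⟩, h0⟩ := hne
  obtain ⟨i, ⟨j1, hi⟩, hi'⟩ := Int.exists_least_of_bdd (P := fun i => ∃ j, (i, j) ∈ S)
    ⟨-N, fun z ⟨j, hz⟩ => (hN _ _ hz).1.le⟩ ⟨i0, j0, h0⟩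
  obtain ⟨u, ⟨u1, u2⟩, u3⟩ := Int.exists_greatest_of_bdd
      (P := fun j => j < j1 ∧ (i, j) ∉ S) ⟨j1, fun z hz => hz.1.le⟩
      ⟨-(N.natAbs : ℤ) - j1.natAbs - 1, by omega, fun h => by have := hN _ _ h; omega⟩
  obtain ⟨v, ⟨v1, v2⟩, v3⟩ := Int.exists_least_of_bdd
      (P := fun j => j1 < j ∧ (i, j) ∉ S) ⟨j1, fun z hz => hz.1.le⟩
      ⟨(N.natAbs : ℤ) + j1.natAbs + 1, by omega, fun h => by have := hN _ _ h; omega⟩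
  refine ⟨i, u + 1, v, ⟨by omega, ?_, by simpa using u2, v2⟩, ?_⟩
  · intro j g1 g2
    by_contra g3
    rcases lt_trichotomy j j1 with g | rfl | g
    · have := u3 j ⟨g, g3⟩; omega
    · exact g3 hi
    · have := v3 j ⟨g, g3⟩; omega
  · intro j _ _ h
    have := hi' _ ⟨j, h⟩
    omega

theorem core (ha : IsGrid a) (n : ℕ) : ∀ S : Set (ℤ × ℤ), (tops S).ncard = n → S.Finite →
    S.Nonempty → Regular S → IsPreconnected (R a S) →
    ∃ Φ : E2 ≃ₜ E2, Good Φ ∧ Model (Φ '' R a S) := by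
  induction n using Nat.strong_induction_on with
  | _ n ih =>
  rintro S rfl hS hne hreg hc
  obtain ⟨N, hN⟩ := bdd_of_finite hS
  obtain ⟨i0, b0, t0, hr0, hl0⟩ := start_run hS hne
  obtain ⟨Y, i, b, t, hY, hr, hl, c, d, hbc, hcd, hdt, hE⟩ :=
    find_run (M := N) (fun i j h => (hN i j h).2.1) (N - i0).toNat S i0 b0 t0 (Or.inl rfl) hr0 hl0
      (by omega)
  have hlt := hr.lt
  have g0 : a i < a (i + 1) := ha.mono (by omega)
  have g5 : a b < a t := ha.mono hlt
  rcases hY with rfl | rfl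
  · rcases hcd.lt_or_eq with hcd | hcd
    · obtain ⟨Φ, g, hΦ⟩ := flip ha hr hreg hl hbc hcd hdt hE
      obtain ⟨Ψ, g', hΨ⟩ := ih _ (tops_remove hS hr) _ rfl (hS.subset sdiff_subset)
        ⟨(i + 1, c), (hE c hbc (by omega)).mpr ⟨le_rfl, hcd⟩, fun h => by
          have := mem_col.mp h; omega⟩ (hr.regular hreg)
        (by rw [← hΦ]; exact hc.image _ Φ.continuous.continuousOn)
      refine ⟨Φ.trans Ψ, g.trans g', ?_⟩
      rwa [trans_image, hΦ]
    · have := isolated_black ha hr hreg hc hl (fun j h1 h2 h3 => by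
        have := (hE j h1 h2).mp h3; omega)
      rw [this, R_col ha _ _ _ hlt]
      exact rect_model _ _ _ _ g0 g5
  · have hS' : Regular (S ∪ col i b t) := by
      have := (hr.regular hreg.compl).compl
      rwa [sdiff_eq, compl_inter, compl_compl, compl_compl] at this
    have hfin : (S ∪ col i b t).Finite := hS.union (finite_col i b t)
    rcases hcd.lt_or_eq with hcd | hcd
    · obtain ⟨Φ, g, hΦ⟩ := flip ha hr hreg.compl hl hbc hcd hdt hE
      replace hΦ := image_R_compl ha Φ hΦ
      rw [sdiff_eq, compl_inter, compl_compl, compl_compl] at hΦ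
      obtain ⟨Ψ, g', hΨ⟩ := ih _ (tops_add hS hr) _ rfl hfin (hne.mono subset_union_left) hS'
        (by rw [← hΦ]; exact hc.image _ Φ.continuous.continuousOn)
      refine ⟨Φ.trans Ψ, g.trans g', ?_⟩
      rwa [trans_image, hΦ]
    · obtain ⟨h1, ⟨δ, hδ, h2⟩, h3⟩ := isolated_white ha hr hreg
        (fun j e1 e2 => not_not.mp (hl j e1 e2)) (fun j e1 e2 => by
          by_contra h3; have := (hE j e1 e2).mp h3; omega)
      obtain ⟨Ψ, g', hΨ⟩ := ih _ (tops_add hS hr) _ rfl hfin (hne.mono subset_union_left) hS' (by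
        rw [R_union, R_col ha _ _ _ hlt]
        refine IsPreconnected.union (a i, a b) h3 ⟨⟨le_rfl, g0.le⟩, le_rfl, g5.le⟩ hc ?_
        exact isPreconnected_Icc.prod isPreconnected_Icc)
      rw [h1]
      exact model_addhole g' hΨ g0 g5 hδ h2

end
end DH

namespace DH
open Filter Topology

section radial
variable {E F : Type*} [NormedAddCommGroup E] [NormedSpace ℝ E]
  [NormedAddCommGroup F] [NormedSpace ℝ F]

lemma radial (ρ : E → ℝ) (m B : ℝ) (hm : 0 < m) (h1 : ∀ y, m ≤ ρ y) (h2 : ∀ y, ρ y ≤ B)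
    (hc : ∀ y, y ≠ 0 → ContinuousAt ρ y)
    (hmono : ∀ y, y ≠ 0 → ∀ t : ℝ, 1 ≤ t → ρ y ≤ ρ (t • y)) :
    Continuous (fun y => ρ y • y) ∧ Function.Bijective (fun y => ρ y • y) := by
  have hpos : ∀ y, 0 < ρ y := fun y => hm.trans_le (h1 y)
  have hcont : Continuous (fun y => ρ y • y) := by
    rw [continuous_iff_continuousAt]
    intro y
    by_cases hy : y = 0
    · subst hy
      rw [ContinuousAt, smul_zero, tendsto_zero_iff_norm_tendsto_zero]
      have : Tendsto (fun y : E => B * ‖y‖) (𝓝 0) (𝓝 0) := by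
        have : Continuous (fun y : E => B * ‖y‖) := by fun_prop
        simpa using this.tendsto 0
      refine squeeze_zero (fun y => norm_nonneg _) (fun y => ?_) this
      rw [norm_smul, Real.norm_of_nonneg (hpos y).le]
      exact mul_le_mul_of_nonneg_right (h2 y) (norm_nonneg _)
    · exact (hc y hy).smul continuousAt_id
  refine ⟨hcont, ?_, ?_⟩
  · have key : ∀ (y : E) (t : ℝ), 1 ≤ t → ρ y • y = ρ (t • y) • (t • y) → y = t • y := by
      intro y t ht h
      by_cases hy : y = 0
      · simp [hy]
      · rw [smul_smul] at h
        have h3 := smul_left_injective ℝ hy h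
        have h4 := hmono y hy t ht
        have h5 := hpos y
        have : t = 1 := by
          apply le_antisymm _ ht
          by_contra h6
          push Not at h6
          nlinarith
        rw [this, one_smul]
    intro y z h
    simp only at h
    by_cases hz : z = 0
    · rw [hz, smul_zero] at h
      rw [hz]; exact (smul_eq_zero.mp h).resolve_left (hpos y).ne'
    · have hzy : z = (ρ y / ρ z) • y := by
        rw [div_eq_inv_mul, mul_smul, h, smul_smul, inv_mul_cancel₀ (hpos z).ne', one_smul]
      have hyz : y = (ρ z / ρ y) • z := by
        rw [div_eq_inv_mul, mul_smul, ← h, smul_smul, inv_mul_cancel₀ (hpos y).ne', one_smul]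
      rcases le_total (ρ z) (ρ y) with hle | hle
      · have := key y (ρ y / ρ z) ((one_le_div (hpos z)).mpr hle) (by rw [← hzy]; exact h)
        rw [← hzy] at this; exact this
      · have := key z (ρ z / ρ y) ((one_le_div (hpos y)).mpr hle) (by rw [← hyz]; exact h.symm)
        rw [← hyz] at this; exact this.symm
  · intro w
    by_cases hw : w = 0
    · exact ⟨0, by simp [hw]⟩
    · have hwn : 0 < ‖w‖ := norm_pos_iff.mpr hw
      have c1 : Continuous (fun t : ℝ => ‖ρ (t • w) • (t • w)‖) :=
        (hcont.comp (by fun_prop : Continuous (fun t : ℝ => t • w))).norm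
      have := intermediate_value_Icc (a := 0) (b := m⁻¹) (by positivity) c1.continuousOn
      obtain ⟨t, ht, ht'⟩ := this (show ‖w‖ ∈ _ by
        refine ⟨by simp, ?_⟩
        rw [smul_smul, norm_smul, Real.norm_of_nonneg
          (mul_nonneg (hpos _).le (by positivity))]
        have := h1 (m⁻¹ • w)
        have h3 : 1 ≤ ρ (m⁻¹ • w) * m⁻¹ := by
          rw [← div_eq_mul_inv, one_le_div hm]; exact this
        nlinarith)
      refine ⟨t • w, ?_⟩
      simp only at ht' ⊢
      rw [smul_smul, norm_smul, Real.norm_of_nonneg (mul_nonneg (hpos _).le ht.1)] at ht'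
      have : ρ (t • w) * t = 1 := by
        have : (ρ (t • w) * t - 1) * ‖w‖ = 0 := by linarith
        rcases mul_eq_zero.mp this with h | h
        · linarith
        · exact absurd h hwn.ne'
      rw [smul_smul, this, one_smul]

/-- clamped ramp -/
def ramp (s1 s2 s : ℝ) : ℝ := max 0 (min 1 ((s - s1) / (s2 - s1)))

lemma ramp_nonneg (s1 s2 s : ℝ) : 0 ≤ ramp s1 s2 s := le_max_left _ _
lemma ramp_le_one (s1 s2 s : ℝ) : ramp s1 s2 s ≤ 1 := max_le zero_le_one (min_le_left _ _)
lemma ramp_low {s1 s2 s : ℝ} (h : s1 < s2) (hs : s ≤ s1) : ramp s1 s2 s = 0 := by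
  unfold ramp
  apply max_eq_left
  refine (min_le_right _ _).trans (div_nonpos_of_nonpos_of_nonneg (by linarith) (by linarith))
lemma ramp_high {s1 s2 s : ℝ} (h : s1 < s2) (hs : s2 ≤ s) : ramp s1 s2 s = 1 := by
  unfold ramp
  rw [min_eq_left, max_eq_right zero_le_one]
  rw [one_le_div (by linarith)]; linarith
lemma ramp_mono {s1 s2 s s' : ℝ} (h : s1 < s2) (hs : s ≤ s') : ramp s1 s2 s ≤ ramp s1 s2 s' := by
  unfold ramp
  apply max_le_max le_rfl
  apply min_le_min le_rfl
  apply div_le_div_of_nonneg_right _ (by linarith)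
  linarith
lemma ramp_cont (s1 s2 : ℝ) : Continuous (ramp s1 s2) := by
  unfold ramp; fun_prop

/-- interpolating radial maps -/
lemma radial2 (L : E ≃L[ℝ] F) (s1 s2 : ℝ) (hs : s1 < s2) (β1 β2 : E → ℝ) (m B : ℝ) (hm : 0 < m)
    (hmβ : ∀ y, m ≤ β1 y) (hβ : ∀ y, β1 y ≤ β2 y) (hB : ∀ y, β2 y ≤ B)
    (c1 : ∀ y, y ≠ 0 → ContinuousAt β1 y) (c2 : ∀ y, y ≠ 0 → ContinuousAt β2 y)
    (hom1 : ∀ y, y ≠ 0 → ∀ t : ℝ, 1 ≤ t → β1 (t • y) = β1 y)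
    (hom2 : ∀ y, y ≠ 0 → ∀ t : ℝ, 1 ≤ t → β2 (t • y) = β2 y) :
    ∃ h : E → E, Continuous h ∧ Function.Bijective h ∧ (∀ y, ‖L y‖ ≤ s1 → h y = β1 y • y) ∧
      (∀ y, s2 ≤ ‖L y‖ → h y = β2 y • y) ∧ (∀ y, β1 y * ‖y‖ ≤ ‖h y‖ ∧ ‖h y‖ ≤ β2 y * ‖y‖) := by
  set ρ : E → ℝ := fun y => β1 y + ramp s1 s2 ‖L y‖ * (β2 y - β1 y) with hρ
  have l1 : ∀ y, β1 y ≤ ρ y := fun y => by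
    have := mul_nonneg (ramp_nonneg s1 s2 ‖L y‖) (sub_nonneg.mpr (hβ y))
    simp only [hρ]; linarith
  have l2 : ∀ y, ρ y ≤ β2 y := fun y => by
    have := mul_le_mul_of_nonneg_right (ramp_le_one s1 s2 ‖L y‖) (sub_nonneg.mpr (hβ y))
    simp only [hρ]; linarith
  obtain ⟨k1, k2⟩ := radial ρ m B hm (fun y => (hmβ y).trans (l1 y)) (fun y => (l2 y).trans (hB y))
    (by
      intro y hy
      have : ContinuousAt (fun y => ramp s1 s2 ‖L y‖) y :=
        ((ramp_cont s1 s2).comp (by fun_prop)).continuousAt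
      exact (c1 y hy).add (this.mul ((c2 y hy).sub (c1 y hy))))
    (by
      intro y hy t ht
      simp only [hρ]
      rw [hom1 y hy t ht, hom2 y hy t ht]
      have : ramp s1 s2 ‖L y‖ ≤ ramp s1 s2 ‖L (t • y)‖ := by
        apply ramp_mono hs
        rw [map_smul, norm_smul, Real.norm_of_nonneg (by linarith)]
        nlinarith [norm_nonneg (L y)]
      have := mul_le_mul_of_nonneg_right this (sub_nonneg.mpr (hβ y))
      linarith)
  refine ⟨fun y => ρ y • y, k1, k2, ?_, ?_, ?_⟩
  · intro y hy
    simp only [hρ, ramp_low hs hy]; simp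
  · intro y hy
    simp only [hρ, ramp_high hs hy]; simp
  · intro y
    have : 0 < ρ y := hm.trans_le ((hmβ y).trans (l1 y))
    rw [norm_smul, Real.norm_of_nonneg this.le]
    exact ⟨mul_le_mul_of_nonneg_right (l1 y) (norm_nonneg _),
      mul_le_mul_of_nonneg_right (l2 y) (norm_nonneg _)⟩

/-- the ratio of two norms, set to `q` at the origin -/
def ratio (L : E ≃L[ℝ] F) (q : ℝ) (y : E) : ℝ := open Classical in if y = 0 then q else ‖L y‖ / ‖y‖

lemma ratio_ne (L : E ≃L[ℝ] F) (q : ℝ) {y : E} (hy : y ≠ 0) : ratio L q y = ‖L y‖ / ‖y‖ := by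
  simp [ratio, hy]

lemma ratio_cont (L : E ≃L[ℝ] F) (q : ℝ) {y : E} (hy : y ≠ 0) : ContinuousAt (ratio L q) y := by
  have : ContinuousAt (fun y => ‖L y‖ / ‖y‖) y :=
    ContinuousAt.div (by fun_prop) (by fun_prop) (norm_ne_zero_iff.mpr hy)
  refine this.congr ?_
  filter_upwards [isOpen_compl_singleton.mem_nhds hy] with z hz
  rw [ratio_ne L q hz]

lemma ratio_hom (L : E ≃L[ℝ] F) (q : ℝ) {y : E} (hy : y ≠ 0) {t : ℝ} (ht : 1 ≤ t) :
    ratio L q (t • y) = ratio L q y := by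
  have h0 : t ≠ 0 := by linarith
  rw [ratio_ne L q hy, ratio_ne L q (smul_ne_zero h0 hy), map_smul, norm_smul, norm_smul,
    mul_div_mul_left _ _ (norm_ne_zero_iff.mpr h0)]

lemma ratio_mul (L : E ≃L[ℝ] F) (q : ℝ) (y : E) : ratio L q y * ‖y‖ = ‖L y‖ := by
  by_cases hy : y = 0
  · simp [hy]
  · rw [ratio_ne L q hy, div_mul_cancel₀ _ (norm_ne_zero_iff.mpr hy)]

lemma exists_bounds (L : E ≃L[ℝ] F) : ∃ m M : ℝ, 0 < m ∧ m ≤ M ∧ ∀ y, y ≠ 0 →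
    m ≤ ‖L y‖ / ‖y‖ ∧ ‖L y‖ / ‖y‖ ≤ M := by
  set K := ‖(L.symm : F →L[ℝ] E)‖ + 1 with hK
  have hKp : 0 < K := by positivity
  refine ⟨K⁻¹, max K⁻¹ ‖(L : E →L[ℝ] F)‖, by positivity, le_max_left _ _, ?_⟩
  intro y hy
  have hyn : 0 < ‖y‖ := norm_pos_iff.mpr hy
  constructor
  · rw [le_div_iff₀ hyn, inv_mul_le_iff₀ hKp]
    have := (L.symm : F →L[ℝ] E).le_opNorm (L y)
    simp only [ContinuousLinearEquiv.coe_coe, ContinuousLinearEquiv.symm_apply_apply] at this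
    rw [hK]; nlinarith [norm_nonneg (L y)]
  · rw [div_le_iff₀ hyn]
    have := (L : E →L[ℝ] F).le_opNorm y
    simp only [ContinuousLinearEquiv.coe_coe] at this
    exact this.trans (mul_le_mul_of_nonneg_right (le_max_right _ _) (norm_nonneg _))

lemma round_hole (L : E ≃L[ℝ] F) (l : ℝ) (hl : 1 < l) : ∃ r > (0:ℝ), ∃ h : E → E, Continuous h ∧
    Function.Bijective h ∧ (∀ y, ‖L y‖ < 1 ↔ ‖h y‖ < r) ∧ (∀ y, l ≤ ‖L y‖ → h y = y) ∧
    (∀ y, ‖y‖ ≤ r → ‖L y‖ ≤ 1) := by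
  obtain ⟨m, M, hm, hmM, hb⟩ := exists_bounds L
  have hM : 0 < M := hm.trans_le hmM
  have hq : ∀ y, m ≤ ratio L m y ∧ ratio L m y ≤ M := by
    intro y
    by_cases hy : y = 0
    · simp [ratio, hy, hmM]
    · rw [ratio_ne L m hy]; exact hb y hy
  obtain ⟨h, k1, k2, k3, k4, k5⟩ := radial2 L 1 l hl (fun y => M⁻¹ * ratio L m y) (fun _ => 1)
    (M⁻¹ * m) 1 (by positivity) (fun y => mul_le_mul_of_nonneg_left (hq y).1 (by positivity))
    (fun y => by rw [inv_mul_le_iff₀ hM, mul_one]; exact (hq y).2) (fun y => le_rfl)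
    (fun y hy => continuousAt_const.mul (ratio_cont L m hy)) (fun y hy => continuousAt_const)
    (fun y hy t ht => by rw [ratio_hom L m hy ht]) (fun y hy t ht => rfl)
  have hn : ∀ y, M⁻¹ * ratio L m y * ‖y‖ = M⁻¹ * ‖L y‖ := fun y => by
    rw [mul_assoc, ratio_mul]
  have hMi : 0 < M⁻¹ := by positivity
  refine ⟨M⁻¹, hMi, h, k1, k2, ?_, ?_, ?_⟩
  · intro y
    constructor
    · intro hy
      rw [k3 y hy.le, norm_smul, Real.norm_of_nonneg
        (mul_nonneg hMi.le (hm.le.trans (hq y).1)), hn]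
      nlinarith
    · intro hy
      have := (k5 y).1
      rw [hn] at this
      by_contra hcon
      push Not at hcon
      nlinarith
  · intro y hy
    rw [k4 y hy, one_smul]
  · intro y hy
    rw [← ratio_mul L m y]
    calc ratio L m y * ‖y‖ ≤ M * M⁻¹ :=
          mul_le_mul (hq y).2 hy (norm_nonneg _) hM.le
      _ = 1 := mul_inv_cancel₀ hM.ne'

lemma round_outer (L : E ≃L[ℝ] F) (s : ℝ) (hs : s < 1) : ∃ κ > (0:ℝ), ∃ h : E → E, Continuous h ∧
    Function.Bijective h ∧ (∀ y, ‖L y‖ ≤ 1 ↔ ‖h y‖ ≤ 1) ∧ (∀ y, ‖L y‖ < 1 → ‖h y‖ < 1) ∧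
    (∀ y, ‖L y‖ ≤ s → h y = κ • y) := by
  obtain ⟨m, M, hm, hmM, hb⟩ := exists_bounds L
  have hq : ∀ y, m ≤ ratio L m y ∧ ratio L m y ≤ M := by
    intro y
    by_cases hy : y = 0
    · simp [ratio, hy, hmM]
    · rw [ratio_ne L m hy]; exact hb y hy
  obtain ⟨h, k1, k2, k3, k4, k5⟩ := radial2 L s 1 hs (fun _ => m) (ratio L m) m M hm
    (fun y => le_rfl) (fun y => (hq y).1) (fun y => (hq y).2) (fun y hy => continuousAt_const)
    (fun y hy => ratio_cont L m hy) (fun y hy t ht => rfl) (fun y hy t ht => ratio_hom L m hy ht)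
  have up : ∀ y, ‖h y‖ ≤ ‖L y‖ := fun y => by
    have := (k5 y).2; rwa [ratio_mul] at this
  refine ⟨m, hm, h, k1, k2, ?_, ?_, k3⟩
  · intro y
    refine ⟨fun hy => (up y).trans hy, fun hy => ?_⟩
    by_contra hcon
    push Not at hcon
    rw [k4 y hcon.le, norm_smul, Real.norm_of_nonneg (hm.le.trans (hq y).1), ratio_mul] at hy
    linarith
  · intro y hy
    exact (up y).trans_lt hy

lemma image_eq_of_bij {h : E → E} (hb : Function.Bijective h) {A B : Set E}
    (hAB : ∀ y, y ∈ A ↔ h y ∈ B) : h '' A = B := by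
  have : A = h ⁻¹' B := by ext y; exact hAB y
  rw [this, image_preimage_eq _ hb.surjective]

/-- Combine disjointly supported moves. -/
lemma combine {ι : Type} [Finite ι] (N : ι → Set E) (hN : Pairwise fun i j => Disjoint (N i) (N j))
    (h : ι → E → E) (hc : ∀ i, Continuous (h i)) (hb : ∀ i, Function.Bijective (h i))
    (hid : ∀ i y, y ∉ N i → h i y = y) :
    ∃ H : E → E, Continuous H ∧ Function.Bijective H ∧ (∀ i, ∀ y ∈ N i, H y = h i y) ∧
      (∀ y, (∀ i, y ∉ N i) → H y = y) := by
  classical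
  have := Fintype.ofFinite ι
  have hinv : ∀ i, ∀ y ∈ N i, h i y ∈ N i := by
    intro i y hy
    by_contra hcon
    have := hid i _ hcon
    have := (hb i).injective this
    rw [this] at hcon
    exact hcon hy
  have main : ∀ s : Finset ι, ∃ H : E → E, Continuous H ∧ Function.Bijective H ∧
      (∀ i ∈ s, ∀ y ∈ N i, H y = h i y) ∧ (∀ y, (∀ i ∈ s, y ∉ N i) → H y = y) := by
    intro s
    induction s using Finset.induction_on with
    | empty => exact ⟨id, continuous_id, Function.bijective_id, by simp, by simp⟩
    | insert i s his ih =>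
      obtain ⟨H, h1, h2, h3, h4⟩ := ih
      refine ⟨H ∘ h i, h1.comp (hc i), h2.comp (hb i), ?_, ?_⟩
      · intro j hj y hy
        rcases Finset.mem_insert.mp hj with rfl | hj2
        · rw [Function.comp_apply, h4]
          intro k hk hk'
          have hne : j ≠ k := by rintro rfl; exact his hk
          exact disjoint_left.mp (hN hne) (hinv j y hy) hk'
        · have hne : j ≠ i := by rintro rfl; exact his hj2
          rw [Function.comp_apply, hid i y (disjoint_left.mp (hN hne) hy), h3 j hj2 y hy]
      · intro y hy
        rw [Function.comp_apply, hid i y (hy i (Finset.mem_insert_self _ _)),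
          h4 y (fun j hj => hy j (Finset.mem_insert_of_mem hj))]
  obtain ⟨H, h1, h2, h3, h4⟩ := main Finset.univ
  exact ⟨H, h1, h2, fun i => h3 i (Finset.mem_univ i), fun y hy => h4 y fun i _ => hy i⟩

end radial

abbrev EP : Type := EuclideanSpace ℝ (Fin 2)

lemma compact_ball (M : EP ≃L[ℝ] E2) (c : EP) (l : ℝ) : IsCompact {y | ‖M (y - c)‖ ≤ l} := by
  have : {y | ‖M (y - c)‖ ≤ l} = (fun u => M.symm u + c) '' closedBall 0 l := by
    ext y
    constructor
    · intro hy
      refine ⟨M (y - c), by simpa using hy, by simp⟩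
    · rintro ⟨u, hu, rfl⟩
      simpa using hu
  rw [this]
  exact (isCompact_closedBall _ _).image (by fun_prop)

/-- Turning a square with parallelogram holes into a round disk with round holes. -/
theorem round_model {ι : Type} [Finite ι] (e : EP ≃L[ℝ] E2) (M : ι → EP ≃L[ℝ] E2) (c : ι → EP)
    (h1 : ∀ i y, ‖M i (y - c i)‖ ≤ 1 → ‖e y‖ < 1)
    (h2 : ∀ i j, i ≠ j → ∀ y, ‖M i (y - c i)‖ ≤ 1 → 1 < ‖M j (y - c j)‖) :
    ∃ (c' : ι → EP) (r : ι → ℝ), (∀ i, 0 < r i) ∧ (∀ i, closedBall (c' i) (r i) ⊆ ball 0 1) ∧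
      (Pairwise fun i j => Disjoint (closedBall (c' i) (r i)) (closedBall (c' j) (r j))) ∧
      ∃ H : EP → EP, Continuous H ∧ Function.Bijective H ∧
        H '' ({y | ‖e y‖ ≤ 1} \ ⋃ i, {y | ‖M i (y - c i)‖ < 1}) =
          closedBall 0 1 \ ⋃ i, ball (c' i) (r i) := by
  -- choose a common enlargement factor
  obtain ⟨l, hl1, hl2, hlo, hld⟩ : ∃ l : ℝ, 1 < l ∧ l < 2 ∧
      (∀ i y, ‖M i (y - c i)‖ ≤ l → ‖e y‖ ≤ 2 - l) ∧
      (∀ i j, i ≠ j → ∀ y, ‖M i (y - c i)‖ ≤ l → l < ‖M j (y - c j)‖) := by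
    have e0 : ∀ᶠ l in 𝓝[>] (1:ℝ), 1 < l := self_mem_nhdsWithin
    have e1 : ∀ᶠ l in 𝓝[>] (1:ℝ), l < 2 :=
      nhdsWithin_le_nhds (Iio_mem_nhds (by norm_num))
    have e2 : ∀ᶠ l in 𝓝[>] (1:ℝ), ∀ i y, ‖M i (y - c i)‖ ≤ l → ‖e y‖ ≤ 2 - l := by
      rw [eventually_all]
      intro i
      obtain ⟨μ, hμ, hμ'⟩ := (compact_ball (M i) (c i) 2).exists_forall_le'
        (f := fun y => max ‖M i (y - c i)‖ (2 - ‖e y‖)) (by fun_prop) (a := 1) (by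
          intro y _
          rw [lt_max_iff]
          by_contra hcon
          push Not at hcon
          have := h1 i y hcon.1
          linarith [hcon.2])
      filter_upwards [e1, nhdsWithin_le_nhds (Iio_mem_nhds hμ)] with l hl hlμ y hy
      have := hμ' y (hy.trans hl.le)
      rw [le_max_iff] at this
      simp only [mem_Iio] at hlμ
      rcases this with h | h <;> linarith
    have e3 : ∀ᶠ l in 𝓝[>] (1:ℝ), ∀ i j, i ≠ j → ∀ y, ‖M i (y - c i)‖ ≤ l →
        l < ‖M j (y - c j)‖ := by
      rw [eventually_all]
      intro i
      rw [eventually_all]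
      intro j
      rw [eventually_all]
      intro hij
      obtain ⟨μ, hμ, hμ'⟩ := (compact_ball (M i) (c i) 2).exists_forall_le'
        (f := fun y => max ‖M i (y - c i)‖ ‖M j (y - c j)‖) (by fun_prop) (a := 1) (by
          intro y _
          rw [lt_max_iff]
          by_contra hcon
          push Not at hcon
          have := h2 i j hij y hcon.1
          linarith [hcon.2])
      filter_upwards [e1, nhdsWithin_le_nhds (Iio_mem_nhds hμ)] with l hl hlμ y hy
      have := hμ' y (hy.trans hl.le)
      rw [le_max_iff] at this
      simp only [mem_Iio] at hlμ
      rcases this with h | h <;> linarith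
    obtain ⟨l, q0, q1, q2, q3⟩ := (e0.and (e1.and (e2.and e3))).exists
    exact ⟨l, q0, q1, q2, q3⟩
  choose r hr h k1 k2 k3 k4 k5 using fun i => round_hole (M i) l hl1
  -- translated moves
  let N : ι → Set EP := fun i => {y | ‖M i (y - c i)‖ < l}
  let g : ι → EP → EP := fun i y => h i (y - c i) + c i
  have gb : ∀ i, Function.Bijective (g i) := fun i =>
    ((Equiv.addRight (c i)).bijective.comp ((k2 i).comp (Equiv.subRight (c i)).bijective))
  obtain ⟨H, H1, H2, H3, H4⟩ := combine N (by
      intro i j hij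
      rw [disjoint_left]
      intro y hy hy'
      have := hld i j hij y (le_of_lt hy)
      exact absurd hy' (not_lt.mpr this.le)) g
    (fun i => ((k1 i).comp (by fun_prop)).add continuous_const) gb
    (by
      intro i y hy
      have : l ≤ ‖M i (y - c i)‖ := not_lt.mp hy
      simp only [g]
      rw [k4 i _ this, sub_add_cancel])
  obtain ⟨κ, hκ, O, O1, O2, O3, O4, O5⟩ := round_outer e (2 - l) (by linarith)
  -- images of holes under H
  have I1 : ∀ i, H '' {y | ‖M i (y - c i)‖ < 1} = ball (c i) (r i) := by
    intro i
    have : H '' {y | ‖M i (y - c i)‖ < 1} = g i '' {y | ‖M i (y - c i)‖ < 1} := by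
      apply image_congr
      intro y hy
      exact H3 i y (lt_trans hy hl1)
    rw [this]
    apply image_eq_of_bij (gb i)
    intro y
    simp only [g, mem_ball_iff_norm, add_sub_cancel_right]
    exact k3 i _
  have I2 : H '' {y | ‖e y‖ ≤ 1} = {y | ‖e y‖ ≤ 1} := by
    have : H '' {y | ‖e y‖ ≤ 1}ᶜ = {y | ‖e y‖ ≤ 1}ᶜ := by
      have hf : ∀ y ∈ ({y | ‖e y‖ ≤ 1}ᶜ : Set EP), H y = y := by
        intro y hy
        apply H4
        intro i hi
        apply hy
        have := hlo i y (le_of_lt hi)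
        change ‖e y‖ ≤ 1
        linarith
      rw [image_congr hf, image_id']
    rw [image_compl_eq H2] at this
    exact compl_injective this
  have cb : ∀ i, ∀ y ∈ closedBall (c i) (r i), ‖M i (y - c i)‖ ≤ 1 := by
    intro i y hy
    exact k5 i _ (by rwa [mem_closedBall_iff_norm] at hy)
  have cb2 : ∀ i, ∀ y ∈ closedBall (c i) (r i), O y = κ • y := by
    intro i y hy
    exact O5 y (hlo i y ((cb i y hy).trans hl1.le))
  have J : ∀ (i : ι), O '' closedBall (c i) (r i) = closedBall (κ • c i) (κ * r i) := by
    intro i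
    rw [image_congr (cb2 i), image_smul, _root_.smul_closedBall' hκ.ne', Real.norm_of_nonneg hκ.le]
  have J' : ∀ (i : ι), O '' ball (c i) (r i) = ball (κ • c i) (κ * r i) := by
    intro i
    rw [image_congr (fun y hy => cb2 i y (ball_subset_closedBall hy)), image_smul,
      _root_.smul_ball hκ.ne', Real.norm_of_nonneg hκ.le]
  refine ⟨fun i => κ • c i, fun i => κ * r i, fun i => mul_pos hκ (hr i), ?_, ?_, O ∘ H,
    O1.comp H1, O2.comp H2, ?_⟩
  · intro i
    simp only
    rw [← J i]
    rintro _ ⟨y, hy, rfl⟩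
    rw [mem_ball_zero_iff]
    apply O4
    exact h1 i y (cb i y hy)
  · intro i j hij
    simp only
    rw [← J i, ← J j]
    apply (disjoint_image_iff O2.injective).mpr
    rw [disjoint_left]
    intro y hy hy'
    exact absurd (cb j y hy') (not_le.mpr (h2 i j hij y (cb i y hy)))
  · rw [image_comp, image_sdiff H2.injective, image_iUnion, I2, image_sdiff O2.injective,
      image_iUnion]
    simp only [I1, J']
    congr 1
    apply image_eq_of_bij O2
    intro y
    rw [mem_closedBall_zero_iff]
    exact O3 y

/-- conclusion for model sets -/
theorem model_homeo {D : Set E2} (hD : Model D) :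
    ∃ (n : ℕ) (c : Fin n → EP) (r : Fin n → ℝ),
      (∀ i, 0 < r i) ∧
      (∀ i, closedBall (c i) (r i) ⊆ ball (0 : EP) 1) ∧
      (Pairwise fun i j => Disjoint (closedBall (c i) (r i)) (closedBall (c j) (r j))) ∧
      Nonempty (↥D ≃ₜ ↥(closedBall (0 : EP) 1 \ ⋃ i, ball (c i) (r i))) := by
  obtain ⟨ι, _, L, c, h1, h2, h3⟩ := hD
  obtain ⟨n, ⟨φ⟩⟩ := Finite.exists_equiv_fin ι
  let e : EP ≃L[ℝ] E2 :=
    (EuclideanSpace.equiv (Fin 2) ℝ).trans (ContinuousLinearEquiv.finTwoArrow ℝ ℝ)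
  have memc : ∀ (s : Set E2) i y, y ∈ aff (L i) (c i) '' s ↔ (L i).symm (y - c i) ∈ s := by
    intro s i y
    constructor
    · rintro ⟨u, hu, rfl⟩
      simpa [aff_apply] using hu
    · intro h
      exact ⟨_, h, by simp [aff_apply]⟩
  obtain ⟨c', r, q1, q2, q3, H, q4, q5, q6⟩ := round_model (ι := Fin n) e
    (fun i => e.trans (L (φ.symm i)).symm) (fun i => e.symm (c (φ.symm i)))
    (by
      intro i y hy
      have := h1 (φ.symm i) ((memc _ _ _).mpr (show (L (φ.symm i)).symm (e y - c (φ.symm i)) ∈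
        closedBall 0 1 by simpa using hy))
      simpa using this)
    (by
      intro i j hij y hy
      by_contra hcon
      push Not at hcon
      have m1 := (memc _ _ _).mpr (show (L (φ.symm i)).symm (e y - c (φ.symm i)) ∈
        closedBall 0 1 by simpa using hy)
      have m2 := (memc _ _ _).mpr (show (L (φ.symm j)).symm (e y - c (φ.symm j)) ∈
        closedBall 0 1 by simpa using hcon)
      exact disjoint_left.mp (h2 (φ.symm.injective.ne hij)) m1 m2)
  refine ⟨n, c', r, q1, q2, q3, ?_⟩
  rw [← q6]
  have hset : e.symm '' D = ({y | ‖e y‖ ≤ 1} \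
      ⋃ i, {y | ‖(e.trans (L (φ.symm i)).symm) (y - e.symm (c (φ.symm i)))‖ < 1}) := by
    have : e.symm '' D = e ⁻¹' D := by
      ext y
      constructor
      · rintro ⟨z, hz, rfl⟩; simpa using hz
      · intro hy; exact ⟨e y, hy, by simp⟩
    rw [this]
    ext y
    rw [mem_preimage, h3]
    simp only [Set.mem_sdiff, mem_iUnion, memc, mem_closedBall_zero_iff, mem_ball_zero_iff,
      mem_ofPred_eq, ContinuousLinearEquiv.trans_apply, map_sub,
      ContinuousLinearEquiv.apply_symm_apply]
    rw [φ.symm.surjective.exists]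
  rw [← hset, ← image_comp]
  have hcpt : IsCompact D := by
    rw [h3]
    refine (isCompact_closedBall _ _).diff (isOpen_iUnion fun i => ?_)
    exact (aff (L i) (c i)).isOpenMap _ isOpen_ball
  have : CompactSpace D := isCompact_iff_compactSpace.mp hcpt
  have hinj : Function.Injective (H ∘ e.symm) := q5.injective.comp e.symm.injective
  have hcont : Continuous (H ∘ e.symm) := q4.comp e.symm.continuous
  refine ⟨Continuous.homeoOfEquivCompactToT2 (f := Equiv.Set.image _ D hinj) ?_⟩
  exact Continuous.subtype_mk (hcont.comp continuous_subtype_val) _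

end DH

namespace DH
open Filter Topology

section component
variable {a : ℤ → ℝ}

def Oc (a : ℤ → ℝ) (i j : ℤ) : Set E2 := Ioo (a i) (a (i + 1)) ×ˢ Ioo (a j) (a (j + 1))

lemma rect_sub (ha : IsGrid a) {i i' j j' : ℤ} (hi : i < i') (hj : j < j')
    {S1 S2 : Set (ℤ × ℤ)}
    (h : ∀ k l, i ≤ k → k < i' → j ≤ l → l < j' → (k, l) ∈ S1 \ S2) :
    Ioo (a i) (a i') ×ˢ Ioo (a j) (a j') ⊆ R a S1 \ R a S2 := by
  rintro ⟨x, y⟩ ⟨⟨hx, hx'⟩, hy, hy'⟩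
  simp only at hx hx' hy hy'
  constructor
  · obtain ⟨k, k1, k2, k3, k4⟩ := ha.exists_cell hi hx.le hx'.le
    obtain ⟨l, l1, l2, l3, l4⟩ := ha.exists_cell hj hy.le hy'.le
    exact ⟨k, l, (h k l k1 k2 l1 l2).1, ⟨k3, k4⟩, l3, l4⟩
  · rintro ⟨k, l, hkl, ⟨k3, k4⟩, l3, l4⟩
    have h1 := ha.idx hx hx' k3 k4
    have h2 := ha.idx hy hy' l3 l4
    exact (h k l h1.1 h1.2 h2.1 h2.2).2 hkl

lemma rect_pre (x x' y y' : ℝ) : IsPreconnected (Ioo x x' ×ˢ Ioo y y') :=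
  isPreconnected_Ioo.prod isPreconnected_Ioo

theorem component_eq (ha : IsGrid a) {S1 S2 : Set (ℤ × ℤ)} (hr : Regular (S1 \ S2))
    (hf : (S1 \ S2).Finite) {x0 : E2} (hx0 : x0 ∈ R a S1 \ R a S2) :
    ∃ S : Set (ℤ × ℤ), S.Finite ∧ S.Nonempty ∧ Regular S ∧ IsPreconnected (R a S) ∧
      closure (connectedComponentIn (R a S1 \ R a S2) x0) = R a S := by
  set A := R a S1 \ R a S2 with hA
  set C := connectedComponentIn A x0 with hC
  have habs : ∀ V : Set E2, IsPreconnected V → V ⊆ A → ∀ v ∈ V, v ∈ C → V ⊆ C := by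
    intro V h1 h2 v hv hvC
    rw [hC, connectedComponentIn_eq hvC]
    exact h1.subset_connectedComponentIn hv h2
  have hOA : ∀ i j, (i, j) ∈ S1 \ S2 → Oc a i j ⊆ A := by
    intro i j h
    refine rect_sub ha (by omega) (by omega) ?_
    intro k l h1 h2 h3 h4
    obtain rfl : k = i := by omega
    obtain rfl : l = j := by omega
    exact h
  have hOne : ∀ i j, (Oc a i j).Nonempty := by
    intro i j
    exact (nonempty_Ioo.mpr (ha.mono (by omega))).prod (nonempty_Ioo.mpr (ha.mono (by omega)))
  have hOp : ∀ i j, IsPreconnected (Oc a i j) := fun i j => rect_pre _ _ _ _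
  set S : Set (ℤ × ℤ) := {c | c ∈ S1 \ S2 ∧ Oc a c.1 c.2 ⊆ C} with hS
  have hcell : ∀ x ∈ C, ∃ i j, (i, j) ∈ S ∧ (a i ≤ x.1 ∧ x.1 ≤ a (i + 1)) ∧
      (a j ≤ x.2 ∧ x.2 ≤ a (j + 1)) := by
    intro x hx
    have hxA : x ∈ A := connectedComponentIn_subset _ _ hx
    have hxA2 := hxA
    obtain ⟨⟨i, j, h1, h2, h3⟩, h4⟩ := hxA2
    have hT : (i, j) ∈ S1 \ S2 := ⟨h1, fun h => h4 ⟨i, j, h, h2, h3⟩⟩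
    refine ⟨i, j, ⟨hT, ?_⟩, h2, h3⟩
    have hp : IsPreconnected (insert x (Oc a i j)) := by
      refine (hOp i j).subset_closure (subset_insert _ _) ?_
      refine insert_subset ?_ subset_closure
      rw [Oc, closure_open_cell ha]
      exact ⟨h2, h3⟩
    exact (subset_insert _ _).trans (habs _ hp (insert_subset hxA (hOA i j hT)) x
      (mem_insert _ _) hx)
  have hcl : closure C = R a S := by
    apply subset_antisymm
    · exact closure_minimal (fun x hx => hcell x hx) (isClosed_R ha _)
    · rintro x ⟨i, j, ⟨hT, hO⟩, h2, h3⟩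
      apply closure_mono hO
      change x ∈ closure (Oc a i j)
      rw [Oc, closure_open_cell ha]
      exact ⟨h2, h3⟩
  have tr : ∀ (i j i' j' : ℤ) (V : Set E2), IsPreconnected V → V ⊆ A → Oc a i j ⊆ V →
      Oc a i' j' ⊆ V → (i, j) ∈ S → (i', j') ∈ S1 \ S2 → (i', j') ∈ S := by
    intro i j i' j' V h1 h2 h3 h4 h5 h6
    obtain ⟨v, hv⟩ := hOne i j
    exact ⟨h6, h4.trans (habs V h1 h2 v (h3 hv) (h5.2 hv))⟩
  have adjH : ∀ k l, (k, l) ∈ S1 \ S2 → (k + 1, l) ∈ S1 \ S2 →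
      ((k, l) ∈ S ↔ (k + 1, l) ∈ S) := by
    intro k l h1 h2
    have hV : Ioo (a k) (a (k + 1 + 1)) ×ˢ Ioo (a l) (a (l + 1)) ⊆ A := by
      refine rect_sub ha (by omega) (by omega) ?_
      intro k' l' h3 h4 h5 h6
      obtain rfl : l' = l := by omega
      rcases (by omega : k' = k ∨ k' = k + 1) with rfl | rfl <;> assumption
    have s1 : Oc a k l ⊆ Ioo (a k) (a (k + 1 + 1)) ×ˢ Ioo (a l) (a (l + 1)) :=
      prod_mono (Ioo_subset_Ioo_right (ha.mono (by omega)).le) subset_rfl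
    have s2 : Oc a (k + 1) l ⊆ Ioo (a k) (a (k + 1 + 1)) ×ˢ Ioo (a l) (a (l + 1)) :=
      prod_mono (Ioo_subset_Ioo_left (ha.mono (by omega)).le) subset_rfl
    exact ⟨fun h => tr _ _ _ _ _ (rect_pre _ _ _ _) hV s1 s2 h h2,
      fun h => tr _ _ _ _ _ (rect_pre _ _ _ _) hV s2 s1 h h1⟩
  have adjV : ∀ k l, (k, l) ∈ S1 \ S2 → (k, l + 1) ∈ S1 \ S2 →
      ((k, l) ∈ S ↔ (k, l + 1) ∈ S) := by
    intro k l h1 h2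
    have hV : Ioo (a k) (a (k + 1)) ×ˢ Ioo (a l) (a (l + 1 + 1)) ⊆ A := by
      refine rect_sub ha (by omega) (by omega) ?_
      intro k' l' h3 h4 h5 h6
      obtain rfl : k' = k := by omega
      rcases (by omega : l' = l ∨ l' = l + 1) with rfl | rfl <;> assumption
    have s1 : Oc a k l ⊆ Ioo (a k) (a (k + 1)) ×ˢ Ioo (a l) (a (l + 1 + 1)) :=
      prod_mono subset_rfl (Ioo_subset_Ioo_right (ha.mono (by omega)).le)
    have s2 : Oc a k (l + 1) ⊆ Ioo (a k) (a (k + 1)) ×ˢ Ioo (a l) (a (l + 1 + 1)) :=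
      prod_mono subset_rfl (Ioo_subset_Ioo_left (ha.mono (by omega)).le)
    exact ⟨fun h => tr _ _ _ _ _ (rect_pre _ _ _ _) hV s1 s2 h h2,
      fun h => tr _ _ _ _ _ (rect_pre _ _ _ _) hV s2 s1 h h1⟩
  have hST : ∀ c, c ∈ S → c ∈ S1 \ S2 := fun c h => h.1
  refine ⟨S, hf.subset hST, ?_, ?_, ?_, hcl⟩
  · obtain ⟨i, j, h, _⟩ := hcell x0 (mem_connectedComponentIn hx0)
    exact ⟨_, h⟩
  · intro k l
    have t := hr k l
    have b1 := adjH k l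
    have b2 := adjH k (l + 1)
    have b3 := adjV k l
    have b4 := adjV (k + 1) l
    have c1 := hST (k, l)
    have c2 := hST (k + 1, l)
    have c3 := hST (k, l + 1)
    have c4 := hST (k + 1, l + 1)
    constructor
    · rintro ⟨d1, d2, d3, d4⟩
      have e3 : (k + 1, l) ∉ S1 \ S2 := fun h => d3 ((b1 (c1 d1) h).mp d1)
      have e4 : (k, l + 1) ∉ S1 \ S2 := fun h => d4 ((b3 (c1 d1) h).mp d1)
      exact t.1 ⟨c1 d1, c4 d2, e3, e4⟩
    · rintro ⟨d1, d2, d3, d4⟩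
      have e3 : (k, l) ∉ S1 \ S2 := fun h => d3 ((b1 h (c2 d1)).mpr d1)
      have e4 : (k + 1, l + 1) ∉ S1 \ S2 := fun h => d4 ((b4 (c2 d1) h).mp d1)
      exact t.2 ⟨c2 d1, c3 d2, e3, e4⟩
  · rw [← hcl]
    exact isPreconnected_connectedComponentIn.closure

end component

/-- Only one of the two colourings changes, and monotonically. -/
def Alt (X Y : ℤ → ℤ → Prop) (k : ℤ) : Prop :=
  ((∀ l, X k l ↔ X (k + 1) l) ∧ ((∀ l, Y k l → Y (k + 1) l) ∨ (∀ l, Y (k + 1) l → Y k l)))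

lemma regular_diff {X Y : Set (ℤ × ℤ)}
    (H : ∀ k, Alt (fun i j => (i, j) ∈ X) (fun i j => (i, j) ∈ Y) k ∨
      Alt (fun i j => (i, j) ∈ Y) (fun i j => (i, j) ∈ X) k)
    (V : ∀ k, Alt (fun i j => (j, i) ∈ X) (fun i j => (j, i) ∈ Y) k ∨
      Alt (fun i j => (j, i) ∈ Y) (fun i j => (j, i) ∈ X) k) : Regular (X \ Y) := by
  intro k l
  simp only [Set.mem_sdiff]
  rcases H k with ⟨h1, h2 | h2⟩ | ⟨h1, h2 | h2⟩ <;>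
  rcases V l with ⟨h3, h4 | h4⟩ | ⟨h3, h4 | h4⟩ <;>
  · have a1 := h1 l
    have a2 := h1 (l + 1)
    have a3 := h2 l
    have a4 := h2 (l + 1)
    have a5 := h3 k
    have a6 := h3 (k + 1)
    have a7 := h4 k
    have a8 := h4 (k + 1)
    clear h1 h2 h3 h4 H V
    simp only at a1 a2 a3 a4 a5 a6 a7 a8
    grind

/-- The grid lines. -/
def gr (ε : ℝ) (n : ℤ) : ℝ :=
  if n % 4 = 0 then ((n / 4 : ℤ) : ℝ) - 2 * ε else if n % 4 = 1 then ((n / 4 : ℤ) : ℝ) - ε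
  else if n % 4 = 2 then ((n / 4 : ℤ) : ℝ) + ε else ((n / 4 : ℤ) : ℝ) + 2 * ε

lemma gr0 (ε : ℝ) (k : ℤ) : gr ε (4 * k) = k - 2 * ε := by
  have h1 : (4 * k) % 4 = 0 := by omega
  have h2 : (4 * k) / 4 = k := by omega
  simp only [gr, h1, h2, if_true]

lemma gr1 (ε : ℝ) (k : ℤ) : gr ε (4 * k + 1) = k - ε := by
  have h1 : (4 * k + 1) % 4 = 1 := by omega
  have h2 : (4 * k + 1) / 4 = k := by omega
  simp [gr, h1, h2]

lemma gr2 (ε : ℝ) (k : ℤ) : gr ε (4 * k + 2) = k + ε := by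
  have h1 : (4 * k + 2) % 4 = 2 := by omega
  have h2 : (4 * k + 2) / 4 = k := by omega
  simp [gr, h1, h2]

lemma gr3 (ε : ℝ) (k : ℤ) : gr ε (4 * k + 3) = k + 2 * ε := by
  have h1 : (4 * k + 3) % 4 = 3 := by omega
  have h2 : (4 * k + 3) / 4 = k := by omega
  simp [gr, h1, h2]

lemma gr_grid {ε : ℝ} (h0 : 0 < ε) (h1 : ε < 1 / 4) : IsGrid (gr ε) := by
  have g4 : ∀ k : ℤ, gr ε (4 * k + 3 + 1) = k + 1 - 2 * ε := by
    intro k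
    rw [show 4 * k + 3 + 1 = 4 * (k + 1) by ring, gr0]; push_cast; ring
  refine ⟨strictMono_int_of_lt_succ ?_, ?_⟩
  · intro n
    obtain ⟨k, hk⟩ : ∃ k, n = 4 * k ∨ n = 4 * k + 1 ∨ n = 4 * k + 2 ∨ n = 4 * k + 3 :=
      ⟨n / 4, by omega⟩
    rcases hk with rfl | rfl | rfl | rfl
    · rw [gr0, gr1]; linarith
    · rw [show 4 * k + 1 + 1 = 4 * k + 2 by ring, gr1, gr2]; linarith
    · rw [show 4 * k + 2 + 1 = 4 * k + 3 by ring, gr2, gr3]; linarith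
    · rw [g4, gr3]; linarith
  · intro x
    have f1 := Int.floor_le (x + 2 * ε)
    have f2 := Int.lt_floor_add_one (x + 2 * ε)
    set k := ⌊x + 2 * ε⌋
    by_cases c1 : x < k - ε
    · exact ⟨4 * k, by rw [gr0]; linarith, by rw [gr1]; exact c1⟩
    by_cases c2 : x < k + ε
    · exact ⟨4 * k + 1, by rw [gr1]; linarith,
        by rw [show 4 * k + 1 + 1 = 4 * k + 2 by ring, gr2]; exact c2⟩
    by_cases c3 : x < k + 2 * ε
    · exact ⟨4 * k + 2, by rw [gr2]; linarith,
        by rw [show 4 * k + 2 + 1 = 4 * k + 3 by ring, gr3]; exact c3⟩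
    · exact ⟨4 * k + 3, by rw [gr3]; linarith, by rw [g4]; linarith⟩

/-- Cells of a thickened image. -/
def Cells (b t : ℤ) (S : Set (ℕ × ℕ)) : Set (ℤ × ℤ) :=
  {c | ∃ p ∈ S, (4 * (p.1 : ℤ) - b ≤ c.1 ∧ c.1 < 4 * p.1 + t) ∧
    (4 * (p.2 : ℤ) - b ≤ c.2 ∧ c.2 < 4 * p.2 + t)}

lemma mem_R_cells {a : ℤ → ℝ} (ha : IsGrid a) (b t : ℤ) (hbt : 0 < b + t) (S : Set (ℕ × ℕ))
    (z : E2) : z ∈ R a (Cells b t S) ↔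
    ∃ p ∈ S, (a (4 * (p.1 : ℤ) - b) ≤ z.1 ∧ z.1 ≤ a (4 * (p.1 : ℤ) + t)) ∧
      (a (4 * (p.2 : ℤ) - b) ≤ z.2 ∧ z.2 ≤ a (4 * (p.2 : ℤ) + t)) := by
  constructor
  · rintro ⟨i, j, ⟨p, hp, ⟨h1, h2⟩, h3, h4⟩, ⟨k1, k2⟩, k3, k4⟩
    simp only at h1 h2 h3 h4
    refine ⟨p, hp, ⟨(ha.mono.monotone h1).trans k1, k2.trans (ha.mono.monotone (by omega))⟩,
      (ha.mono.monotone h3).trans k3, k4.trans (ha.mono.monotone (by omega))⟩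
  · rintro ⟨p, hp, ⟨h1, h2⟩, h3, h4⟩
    obtain ⟨i, i1, i2, i3, i4⟩ := ha.exists_cell (by omega) h1 h2
    obtain ⟨j, j1, j2, j3, j4⟩ := ha.exists_cell (by omega) h3 h4
    exact ⟨i, j, ⟨p, hp, ⟨i1, i2⟩, j1, j2⟩, ⟨i3, i4⟩, j3, j4⟩

lemma cells_alt (P G : Set (ℕ × ℕ)) (k : ℤ) :
    Alt (fun i j => (i, j) ∈ Cells 3 2 P) (fun i j => (i, j) ∈ Cells 4 3 G) k ∨
      Alt (fun i j => (i, j) ∈ Cells 4 3 G) (fun i j => (i, j) ∈ Cells 3 2 P) k := by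
  have hk : k % 4 = 0 ∨ k % 4 = 1 ∨ k % 4 = 2 ∨ k % 4 = 3 := by omega
  have hm : ∀ (b t : ℤ) (S : Set (ℕ × ℕ)) (i i' : ℤ),
      (∀ q : ℤ, 4 * q - b ≤ i → i < 4 * q + t → 4 * q - b ≤ i' ∧ i' < 4 * q + t) →
      ∀ l, (i, l) ∈ Cells b t S → (i', l) ∈ Cells b t S := by
    rintro b t S i i' h l ⟨p, hp, ⟨h1, h2⟩, h3⟩
    exact ⟨p, hp, h _ h1 h2, h3⟩
  rcases hk with hk | hk | hk | hk
  · exact Or.inr ⟨fun l => ⟨hm _ _ _ _ _ (by omega) l, hm _ _ _ _ _ (by omega) l⟩,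
      Or.inl (hm _ _ _ _ _ (by omega))⟩
  · exact Or.inr ⟨fun l => ⟨hm _ _ _ _ _ (by omega) l, hm _ _ _ _ _ (by omega) l⟩,
      Or.inr (hm _ _ _ _ _ (by omega))⟩
  · exact Or.inl ⟨fun l => ⟨hm _ _ _ _ _ (by omega) l, hm _ _ _ _ _ (by omega) l⟩,
      Or.inr (hm _ _ _ _ _ (by omega))⟩
  · exact Or.inl ⟨fun l => ⟨hm _ _ _ _ _ (by omega) l, hm _ _ _ _ _ (by omega) l⟩,
      Or.inl (hm _ _ _ _ _ (by omega))⟩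

lemma cells_alt2 (P G : Set (ℕ × ℕ)) (k : ℤ) :
    Alt (fun i j => (j, i) ∈ Cells 3 2 P) (fun i j => (j, i) ∈ Cells 4 3 G) k ∨
      Alt (fun i j => (j, i) ∈ Cells 4 3 G) (fun i j => (j, i) ∈ Cells 3 2 P) k := by
  have hk : k % 4 = 0 ∨ k % 4 = 1 ∨ k % 4 = 2 ∨ k % 4 = 3 := by omega
  have hm : ∀ (b t : ℤ) (S : Set (ℕ × ℕ)) (i i' : ℤ),
      (∀ q : ℤ, 4 * q - b ≤ i → i < 4 * q + t → 4 * q - b ≤ i' ∧ i' < 4 * q + t) →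
      ∀ l, (l, i) ∈ Cells b t S → (l, i') ∈ Cells b t S := by
    rintro b t S i i' h l ⟨p, hp, h3, ⟨h1, h2⟩⟩
    exact ⟨p, hp, h3, h _ h1 h2⟩
  rcases hk with hk | hk | hk | hk
  · exact Or.inr ⟨fun l => ⟨hm _ _ _ _ _ (by omega) l, hm _ _ _ _ _ (by omega) l⟩,
      Or.inl (hm _ _ _ _ _ (by omega))⟩
  · exact Or.inr ⟨fun l => ⟨hm _ _ _ _ _ (by omega) l, hm _ _ _ _ _ (by omega) l⟩,
      Or.inr (hm _ _ _ _ _ (by omega))⟩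
  · exact Or.inl ⟨fun l => ⟨hm _ _ _ _ _ (by omega) l, hm _ _ _ _ _ (by omega) l⟩,
      Or.inr (hm _ _ _ _ _ (by omega))⟩
  · exact Or.inl ⟨fun l => ⟨hm _ _ _ _ _ (by omega) l, hm _ _ _ _ _ (by omega) l⟩,
      Or.inl (hm _ _ _ _ _ (by omega))⟩

lemma cells_finite (b t : ℤ) {S : Set (ℕ × ℕ)} (hS : S.Finite) : (Cells b t S).Finite := by
  have : Cells b t S ⊆ ⋃ p ∈ S, Icc (4 * (p.1 : ℤ) - b) (4 * p.1 + t) ×ˢ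
      Icc (4 * (p.2 : ℤ) - b) (4 * p.2 + t) := by
    rintro c ⟨p, hp, h1, h2⟩
    simp only [mem_iUnion]
    exact ⟨p, hp, ⟨h1.1, h1.2.le⟩, h2.1, h2.2.le⟩
  exact (hS.biUnion fun p _ => (finite_Icc _ _).prod (finite_Icc _ _)).subset this

end DH

namespace DH

lemma mem_thick {δ : ℝ} (hδ : 0 ≤ δ) (S : Set (ℕ × ℕ)) (z : Plane) :
    z ∈ thick δ (fg S) ↔ ∃ p ∈ S, ((p.1 : ℝ) - 1 - δ ≤ z 0 ∧ z 0 ≤ p.1 + δ) ∧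
      ((p.2 : ℝ) - 1 - δ ≤ z 1 ∧ z 1 ≤ p.2 + δ) := by
  have clamp : ∀ q t : ℝ, q - 1 - δ ≤ t → t ≤ q + δ → ∃ s, (q - 1 ≤ s ∧ s ≤ q) ∧ |s - t| ≤ δ := by
    intro q t h1 h2
    by_cases c1 : t < q - 1
    · exact ⟨q - 1, ⟨le_rfl, by linarith⟩, by rw [abs_le]; constructor <;> linarith⟩
    by_cases c2 : q < t
    · exact ⟨q, ⟨by linarith, le_rfl⟩, by rw [abs_le]; constructor <;> linarith⟩
    · exact ⟨t, ⟨by linarith, by linarith⟩, by simpa using hδ⟩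
  constructor
  · rintro ⟨x, hx, hxz⟩
    rw [pi_norm_le_iff_of_nonneg hδ] at hxz
    have k0 := abs_le.mp (hxz 0)
    have k1 := abs_le.mp (hxz 1)
    simp only [Pi.sub_apply] at k0 k1
    simp only [fg, mem_iUnion] at hx
    obtain ⟨p, hp, ⟨h1, h2⟩, h3, h4⟩ := hx
    refine ⟨p, hp, ⟨?_, ?_⟩, ?_, ?_⟩ <;> linarith [k0.1, k0.2, k1.1, k1.2]
  · rintro ⟨p, hp, ⟨h1, h2⟩, h3, h4⟩
    obtain ⟨s, hs, hs2⟩ := clamp _ _ h1 h2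
    obtain ⟨t, ht, ht2⟩ := clamp _ _ h3 h4
    refine ⟨![s, t], ?_, ?_⟩
    · simp only [fg, mem_iUnion]
      exact ⟨p, hp, hs, ht⟩
    · rw [pi_norm_le_iff_of_nonneg hδ]
      intro i
      fin_cases i
      · exact hs2
      · exact ht2

abbrev e2 : Plane ≃ₜ E2 := Homeomorph.finTwoArrow

lemma thick_P {ε : ℝ} (h0 : 0 < ε) (h1 : ε < 1 / 4) (S : Set (ℕ × ℕ)) (z : Plane) :
    z ∈ thick ε (fg S) ↔ e2 z ∈ R (gr ε) (Cells 3 2 S) := by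
  rw [mem_thick h0.le, mem_R_cells (gr_grid h0 h1) 3 2 (by norm_num)]
  have f1 : ∀ q : ℕ, gr ε (4 * (q : ℤ) - 3) = (q : ℝ) - 1 - ε := by
    intro q
    rw [show 4 * (q : ℤ) - 3 = 4 * ((q : ℤ) - 1) + 1 by ring, gr1]; push_cast; ring
  have f2 : ∀ q : ℕ, gr ε (4 * (q : ℤ) + 2) = (q : ℝ) + ε := by
    intro q
    rw [gr2]; push_cast; ring
  simp only [f1, f2]
  rfl

lemma thick_G {ε : ℝ} (h0 : 0 < ε) (h1 : ε < 1 / 4) (S : Set (ℕ × ℕ)) (z : Plane) :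
    z ∈ thick (2 * ε) (fg S) ↔ e2 z ∈ R (gr ε) (Cells 4 3 S) := by
  rw [mem_thick (by linarith), mem_R_cells (gr_grid h0 h1) 4 3 (by norm_num)]
  have f1 : ∀ q : ℕ, gr ε (4 * (q : ℤ) - 4) = (q : ℝ) - 1 - 2 * ε := by
    intro q
    rw [show 4 * (q : ℤ) - 4 = 4 * ((q : ℤ) - 1) by ring, gr0]; push_cast; ring
  have f2 : ∀ q : ℕ, gr ε (4 * (q : ℤ) + 3) = (q : ℝ) + 2 * ε := by
    intro q
    rw [gr3]; push_cast; ring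
  simp only [f1, f2]
  rfl

theorem final {a : ℤ → ℝ} (ha : IsGrid a) {S1 S2 : Set (ℤ × ℤ)} (hr : Regular (S1 \ S2))
    (hf : (S1 \ S2).Finite) {A C : Set Plane} (hA : ∀ z, z ∈ A ↔ e2 z ∈ R a S1 \ R a S2)
    (hC : IsCompOf C A) :
    ∃ (n : ℕ) (c : Fin n → EPlane) (r : Fin n → ℝ),
      (∀ i, 0 < r i) ∧
      (∀ i, Metric.closedBall (c i) (r i) ⊆ Metric.ball (0 : EPlane) 1) ∧
      (Pairwise fun i j =>
        Disjoint (Metric.closedBall (c i) (r i)) (Metric.closedBall (c j) (r j))) ∧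
      Nonempty (↥(closure C) ≃ₜ
        ↥(Metric.closedBall (0 : EPlane) 1 \ ⋃ i, Metric.ball (c i) (r i))) := by
  obtain ⟨x, hx, rfl⟩ := hC
  have hAe : e2 '' A = R a S1 \ R a S2 := by
    have : A = e2 ⁻¹' (R a S1 \ R a S2) := by ext z; exact hA z
    rw [this, image_preimage_eq _ e2.surjective]
  obtain ⟨S, s1, s2, s3, s4, s5⟩ := component_eq ha hr hf ((hA x).mp hx)
  obtain ⟨Φ, -, hΦ⟩ := core ha _ S rfl s1 s2 s3 s4
  obtain ⟨n, c, r, h1, h2, h3, ⟨ψ⟩⟩ := model_homeo hΦ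
  refine ⟨n, c, r, h1, h2, h3, ⟨?_⟩⟩
  have him : e2 '' closure (connectedComponentIn A x) = R a S := by
    rw [Homeomorph.image_closure, Homeomorph.image_connectedComponentIn _ hx, hAe, s5]
  exact (((e2.image _).trans (Homeomorph.setCongr him)).trans (Φ.image _)).trans ψ

end DH

/-- The closure of every connected component of `FP` (and of `FN`) is
homeomorphic to a closed Euclidean unit disk with finitely many open disks removed, the
removed disks having pairwise disjoint closures contained in the open unit disk. -/
theorem component_closure_homeomorphic_diskWithHoles
    (h w : ℕ) (P G : Set (ℕ × ℕ)) (hP : OnGrid P h w) (hG : OnGrid G h w)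
    (ε : ℝ) (hε0 : 0 < ε) (hε : ε < 1 / 4)
    (C : Set Plane) (hC : IsCompOf C (FPset P G ε) ∨ IsCompOf C (FNset P G ε)) :
    ∃ (n : ℕ) (c : Fin n → EPlane) (r : Fin n → ℝ),
      (∀ i, 0 < r i) ∧
      (∀ i, Metric.closedBall (c i) (r i) ⊆ Metric.ball (0 : EPlane) 1) ∧
      (Pairwise fun i j =>
        Disjoint (Metric.closedBall (c i) (r i)) (Metric.closedBall (c j) (r j))) ∧
      Nonempty (↥(closure C) ≃ₜ
        ↥(Metric.closedBall (0 : EPlane) 1 \ ⋃ i, Metric.ball (c i) (r i))) := by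
  have ha := DH.gr_grid hε0 hε
  have fin : ∀ S : Set (ℕ × ℕ), OnGrid S h w → S.Finite := fun S hS =>
    ((finite_Icc 1 h).prod (finite_Icc 1 w)).subset hS
  rcases hC with hC | hC
  · refine DH.final ha (S1 := DH.Cells 3 2 P) (S2 := DH.Cells 4 3 G)
      (DH.regular_diff (DH.cells_alt P G) (DH.cells_alt2 P G))
      ((DH.cells_finite 3 2 (fin P hP)).subset sdiff_subset) ?_ hC
    intro z
    rw [Set.mem_sdiff, ← DH.thick_P hε0 hε, ← DH.thick_G hε0 hε]
    rfl
  · refine DH.final ha (S1 := DH.Cells 4 3 G) (S2 := DH.Cells 3 2 P)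
      (DH.regular_diff (fun k => (DH.cells_alt P G k).symm) (fun k => (DH.cells_alt2 P G k).symm))
      ((DH.cells_finite 4 3 (fin G hG)).subset sdiff_subset) ?_ hC
    intro z
    rw [Set.mem_sdiff, ← DH.thick_P hε0 hε, ← DH.thick_G hε0 hε]
    exact and_comm

end
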